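/- arXiv:1810.12433 — 2 statements merged into one kernel-verified Lean document; each statement's English description precedes it below -/
import Mathlib

section
/- For every ε > 0 there exists C > 0 such that, whenever p ≥ C log n / n, the binomial random graph G_{n,p} asymptotically almost surely is ε-Pósa-resilient with respect to Hamiltonicity; that is, a.a.s. for every subgraph H ∈ H^ε_{n,p}(G_{n,p}), the graph G_{n,p} ∖ H contains a Hamilton cycle. -/
/-!
Write `F = G \ H`. The Pósa condition on `H` says that for every `θ ≤ 1/2` at most `θ n` vertices
lose more than about `(1 - θ - ε) n p` edges (`posa_highDeg`); since all degrees of `G` are at least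
about `n p`, at most `θ n` vertices have degree below about `(θ + ε) n p` in `F`.

For typical `G` and every such `H`, keeping each edge of `F` with a small constant probability `δ`
yields a subgraph `R` that inherits this degree profile, scaled by `δ`, and whose edge counts
between vertex sets are not much larger than expected (`PR`, `exists_sparse`). For every graph
`Γ ⊇ R` and every longest path of `Γ`, Pósa rotations then produce more than half of the vertices as
first vertices of longest paths with the same last vertex (`det`). As long as the set of first
vertices is small, each round of rotations at least doubles it (`heads_double`). Once it has linear
size, the original path is cut into a large multiple of `log n` blocks; a path obtained by `O(log
n)` rotations traverses most blocks unbroken, so the neighbours of a first vertex in such a block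
all lie just after, or all lie just before, new first vertices. Hence the edges leaving the set of
first vertices fit, block by block, into few candidate sets, and comparing degrees with edge counts
enlarges the set by `ε n / 4` per round until it exceeds `n / 2` (`heads_grow_raw`, `heads_grow`).

Apply this to `Γ = R ∪ P`, where `P` is a longest path of `F`. Then more than `(1/2 + ε/4) n`
vertices `v` start a longest path, and for each of them the set `ends Γ v` of the last vertices of
such paths has at least `n / 2` elements. The sets `ends Γ v` depend only on `Γ`, which has at most
`μ n² p` edges, and there are so few sparse graphs `Γ` that a union bound over all of them is
possible: typically, for every sparse `Γ ⊆ G`, the graph `G` has about the expected number of edges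
from any linear-sized set of such `v` into the sets `ends Γ v` (`PF_boost`). At least `ε n / 4` of
the `v` lose fewer than about `(1/2 - ε) n p` edges, so one of these edges survives in `F` and
closes a longest path to a cycle. As `R` has an edge leaving every set of at most `n / 2` vertices,
a cycle missing a vertex would give a path longer than `P`; so the cycle is Hamiltonian
(`hamiltonian_of_rotations`).

The exceptional events are bounded through exponential moments of edge counts (`PF_upper`, `PF_log`,
`PF_deg`, `PF_boost`), and the sampling of `R` reuses `PF_upper` and `PF_deg` with `F` in place of
the complete graph.
-/

open Filter Real

namespace Resilience

variable {V : Type*}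

/-- The degree of a vertex, as the cardinality of its neighbourhood. -/
noncomputable def deg (G : SimpleGraph V) (v : V) : ℕ := (G.neighborSet v).ncard

/-- The neighbourhood of a set of vertices: all vertices with a neighbour in `X`. -/
def nbhd (G : SimpleGraph V) (X : Set V) : Set V := {v | ∃ x ∈ X, G.Adj v x}

/-- The minimum degree over a set of vertices. -/
noncomputable def minDeg (G : SimpleGraph V) (X : Set V) : ℕ :=
  sInf ((fun v => deg G v) '' X)

/-- The number of edges of `G` with one endpoint in `X` and the other in `Y`. -/
noncomputable def eBetween (G : SimpleGraph V) (X Y : Set V) : ℕ :=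
  {e ∈ G.edgeSet | ∃ x ∈ X, ∃ y ∈ Y, e = s(x, y)}.ncard

/-- The number of edges of `G` with both endpoints in `A`. -/
noncomputable def eIn (G : SimpleGraph V) (A : Set V) : ℕ :=
  {e ∈ G.edgeSet | ∀ v ∈ e, v ∈ A}.ncard

/-- The graph on `V` whose edges are the consecutive pairs of the list `l`;
this lets us view a path, recorded as a list of distinct vertices, as a graph. -/
def listGraph (l : List V) : SimpleGraph V :=
  SimpleGraph.fromEdgeSet {e | ∃ q ∈ l.zip l.tail, e = s(q.1, q.2)}

/-- `l` is a (nonempty) path on `V` all of whose edges lie in `G`. -/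
def IsPathOn (G : SimpleGraph V) (l : List V) : Prop :=
  l ≠ [] ∧ l.Nodup ∧ l.Chain' G.Adj

/-- `l` is a longest path with all edges in `G`. -/
def IsLongestPathOn (G : SimpleGraph V) (l : List V) : Prop :=
  IsPathOn G l ∧ ∀ l' : List V, IsPathOn G l' → l'.length ≤ l.length

/-- `l'` is obtained from the path `l` (with fixed last endpoint) by a single rotation
within `G`, whose broken edge lies on the original path `P`.  Writing
`l = a :: t₁ ++ c :: b :: t₂`, the pivot is `b`, the new edge is `ab ∈ G`, the broken
edge is `cb` (an edge of `P`), and the rotated path is `(a :: t₁ ++ [c]).reverse ++ b :: t₂`. -/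
def IsRotation (G : SimpleGraph V) (P l l' : List V) : Prop :=
  ∃ (a c b : V) (t₁ t₂ : List V),
    l = a :: t₁ ++ c :: b :: t₂ ∧ G.Adj a b ∧ (listGraph P).Adj c b ∧
    l' = (a :: t₁ ++ [c]).reverse ++ b :: t₂

/-- The set of paths obtainable from `P` by at most `t` successive rotations within `G`
with fixed last endpoint, all broken edges lying on `P`. -/
def rotSet (G : SimpleGraph V) (P : List V) : ℕ → Set (List V)
  | 0 => {P}
  | t + 1 => rotSet G P t ∪ {l' | ∃ l ∈ rotSet G P t, IsRotation G P l l'}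

/-- `R^t_{G,P,u}`: the set of endpoints of paths obtainable from `P` by at most `t`
successive rotations within `G` with fixed last endpoint. -/
def Rset (G : SimpleGraph V) (P : List V) (t : ℕ) : Set V :=
  {x | ∃ l ∈ rotSet G P t, l.head? = some x}

/-- The family `H^ε_{n,p}` of Pósa-type subgraphs: there is an ordering of the vertices
with non-increasing degrees such that `d_H(v_i) ≤ (n-i)p - εnp` for all `i < n/2`
(1-based indexing). -/
def PosaFamily (n : ℕ) (p ε : ℝ) (H : SimpleGraph (Fin n)) : Prop :=
  ∃ v : Fin n → Fin n, Function.Bijective v ∧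
    (∀ i j : Fin n, i ≤ j → deg H (v j) ≤ deg H (v i)) ∧
    ∀ i : Fin n, ((i.1 : ℝ) + 1) < n / 2 →
      (deg H (v i) : ℝ) ≤ ((n : ℝ) - ((i.1 : ℝ) + 1)) * p - ε * n * p

/-- The family `H^{ε,δ}_{n,p}` of (shifted) Chvátal-type subgraphs, where the shift
`δn` is recorded as a natural number `s`: there is an ordering of the vertices with
non-increasing degrees such that for all `i < n/2` (1-based indexing), either
`d_H(v_i) ≤ (n-i)p - εnp` or `d_H(v_{n-i-s}) ≤ ip - εnp`. -/
def ChvatalFamily (n : ℕ) (p ε : ℝ) (s : ℕ) (H : SimpleGraph (Fin n)) : Prop :=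
  ∃ v : Fin n → Fin n, Function.Bijective v ∧
    (∀ i j : Fin n, i ≤ j → deg H (v j) ≤ deg H (v i)) ∧
    ∀ i : Fin n, ((i.1 : ℝ) + 1) < n / 2 →
      ((deg H (v i) : ℝ) ≤ ((n : ℝ) - ((i.1 : ℝ) + 1)) * p - ε * n * p ∨
       (deg H (v ⟨n - (i.1 + 1) - s - 1, by have := i.2; omega⟩) : ℝ) ≤
         ((i.1 : ℝ) + 1) * p - ε * n * p)

/-- The probability weight of a fixed graph `G` in the binomial random graph `G_{n,p}`. -/
noncomputable def weight (n : ℕ) (p : ℝ) (G : SimpleGraph (Fin n)) : ℝ :=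
  p ^ G.edgeSet.ncard * (1 - p) ^ (n.choose 2 - G.edgeSet.ncard)

open Classical in
/-- The probability that the binomial random graph `G_{n,p}` satisfies the property `Q`. -/
noncomputable def Pr (n : ℕ) (p : ℝ) (Q : SimpleGraph (Fin n) → Prop) : ℝ :=
  ∑ G : SimpleGraph (Fin n), if Q G then weight n p G else 0

/-- Property `RE(δ)` for a (connected) graph `G` on `n` vertices: for every path `P`
on the vertex set, either `G ∪ P` has a longer path, or there are at least `δn` vertices
`v`, each with a set `T v` of at least `δn` vertices `w`, such that `G ∪ P` has a path
from `v` to `w` with the same vertex set as `P`. -/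
def RE (n : ℕ) (δ : ℝ) (G : SimpleGraph (Fin n)) : Prop :=
  G.Connected ∧
  ∀ P : List (Fin n), P ≠ [] → P.Nodup →
    (∃ Q : List (Fin n), IsPathOn (G ⊔ listGraph P) Q ∧ P.length < Q.length) ∨
    (∃ S : Set (Fin n), δ * n ≤ S.ncard ∧
      ∃ T : Fin n → Set (Fin n), (∀ v ∈ S, δ * n ≤ (T v).ncard) ∧
        ∀ v ∈ S, ∀ w ∈ T v, ∃ Q : List (Fin n),
          IsPathOn (G ⊔ listGraph P) Q ∧ Q.head? = some v ∧ Q.getLast? = some w ∧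
          Q.toFinset = P.toFinset)

/-- `G₂` complements `G₁` (with respect to parameter `δ` as in `RE(δ)`): for every path
`P` on the vertex set, either `G₁ ∪ P` has a longer path, or there are sets `S`, `T v`
as in the definition of `RE(δ)` together with `v ∈ S` and `w ∈ T v` such that `vw` is an
edge of `G₁ ∪ G₂`. -/
def Complements (n : ℕ) (δ : ℝ) (G₁ G₂ : SimpleGraph (Fin n)) : Prop :=
  ∀ P : List (Fin n), P ≠ [] → P.Nodup →
    (∃ Q : List (Fin n), IsPathOn (G₁ ⊔ listGraph P) Q ∧ P.length < Q.length) ∨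
    (∃ S : Set (Fin n), δ * n ≤ S.ncard ∧
      ∃ T : Fin n → Set (Fin n), (∀ v ∈ S, δ * n ≤ (T v).ncard) ∧
        (∀ v ∈ S, ∀ w ∈ T v, ∃ Q : List (Fin n),
          IsPathOn (G₁ ⊔ listGraph P) Q ∧ Q.head? = some v ∧ Q.getLast? = some w ∧
          Q.toFinset = P.toFinset) ∧
        ∃ v ∈ S, ∃ w ∈ T v, (G₁ ⊔ G₂).Adj v w)

/-! ### Random subgraphs and exponential moments -/

section Probability

open scoped Classical

variable {n : ℕ}

/-- The probability that the random subgraph of `F`, keeping each edge independently with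
probability `q`, equals `G`. -/
noncomputable def ewt (F : SimpleGraph (Fin n)) (q : ℝ) (G : SimpleGraph (Fin n)) : ℝ :=
  if G ≤ F then q ^ G.edgeFinset.card * (1 - q) ^ (F.edgeFinset.card - G.edgeFinset.card) else 0

/-- Expectation over the random subgraph of `F` with edge probability `q`. -/
noncomputable def Ew (F : SimpleGraph (Fin n)) (q : ℝ) (φ : SimpleGraph (Fin n) → ℝ) : ℝ :=
  ∑ G : SimpleGraph (Fin n), ewt F q G * φ G

/-- Probability of `Q` for the random subgraph of `F` with edge probability `q`. -/
noncomputable def PF (F : SimpleGraph (Fin n)) (q : ℝ) (Q : SimpleGraph (Fin n) → Prop) : ℝ :=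
  ∑ G : SimpleGraph (Fin n), if Q G then ewt F q G else 0

lemma ewt_nonneg (F : SimpleGraph (Fin n)) {q : ℝ} (h0 : 0 ≤ q) (h1 : q ≤ 1)
    (G : SimpleGraph (Fin n)) : 0 ≤ ewt F q G := by
  unfold ewt
  have : 0 ≤ 1 - q := by linarith
  split_ifs <;> positivity

/-- Independence of the edges, as a product formula for multiplicative functions. -/
lemma Ew_prod (F : SimpleGraph (Fin n)) (q : ℝ) (x : Sym2 (Fin n) → ℝ) :
    Ew F q (fun G => ∏ e ∈ G.edgeFinset, x e) = ∏ e ∈ F.edgeFinset, (q * x e + (1 - q)) := by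
  rw [Finset.prod_add]
  unfold Ew ewt
  simp only [ite_mul, zero_mul]
  rw [← Finset.sum_filter]
  refine Finset.sum_bij' (fun G _ => G.edgeFinset)
    (fun A _ => SimpleGraph.fromEdgeSet (A : Set (Sym2 (Fin n)))) ?_ ?_ ?_ ?_ ?_
  · intro G hG
    simp only [Finset.mem_filter, Finset.mem_univ, true_and] at hG
    simpa using hG
  · intro A hA
    simp only [Finset.mem_powerset] at hA
    simp only [Finset.mem_filter, Finset.mem_univ, true_and]
    intro a b hab
    rw [SimpleGraph.fromEdgeSet_adj] at hab
    have := hA (by simpa using hab.1 : s(a, b) ∈ A)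
    simpa using this
  · intro G hG
    simp
  · intro A hA
    simp only [Finset.mem_powerset] at hA
    ext e
    simp only [SimpleGraph.mem_edgeFinset, SimpleGraph.edgeSet_fromEdgeSet, Set.mem_sdiff,
      Finset.mem_coe]
    constructor
    · exact fun h => h.1
    · intro h
      refine ⟨h, ?_⟩
      have := hA h
      rw [SimpleGraph.mem_edgeFinset] at this
      exact F.not_isDiag_of_mem_edgeSet this
  · intro G hG
    simp only [Finset.mem_filter, Finset.mem_univ, true_and] at hG
    rw [Finset.prod_mul_distrib, Finset.prod_const, Finset.prod_const, Finset.card_sdiff_of_subset]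
    · ring
    · simpa using hG

lemma Ew_one (F : SimpleGraph (Fin n)) (q : ℝ) : Ew F q (fun _ => 1) = 1 := by
  have := Ew_prod F q (fun _ => 1)
  simpa using this

lemma Ew_mono (F : SimpleGraph (Fin n)) {q : ℝ} (h0 : 0 ≤ q) (h1 : q ≤ 1)
    {φ ψ : SimpleGraph (Fin n) → ℝ} (h : ∀ G, G ≤ F → φ G ≤ ψ G) : Ew F q φ ≤ Ew F q ψ := by
  refine Finset.sum_le_sum fun G _ => ?_
  by_cases hG : G ≤ F
  · exact mul_le_mul_of_nonneg_left (h G hG) (ewt_nonneg F h0 h1 G)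
  · simp [ewt, hG]

lemma Ew_sum {ι : Type*} (s : Finset ι) (F : SimpleGraph (Fin n)) (q : ℝ)
    (φ : ι → SimpleGraph (Fin n) → ℝ) :
    Ew F q (fun G => ∑ i ∈ s, φ i G) = ∑ i ∈ s, Ew F q (φ i) := by
  unfold Ew
  simp only [Finset.mul_sum]
  exact Finset.sum_comm

lemma Ew_mul (F : SimpleGraph (Fin n)) (q c : ℝ) (φ : SimpleGraph (Fin n) → ℝ) :
    Ew F q (fun G => c * φ G) = c * Ew F q φ := by
  unfold Ew
  rw [Finset.mul_sum]
  exact Finset.sum_congr rfl fun G _ => by ring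

lemma PF_le_Ew (F : SimpleGraph (Fin n)) {q : ℝ} (h0 : 0 ≤ q) (h1 : q ≤ 1)
    {Q : SimpleGraph (Fin n) → Prop} {φ : SimpleGraph (Fin n) → ℝ} (hφ : ∀ G, 0 ≤ φ G)
    (h : ∀ G, G ≤ F → Q G → 1 ≤ φ G) : PF F q Q ≤ Ew F q φ := by
  refine Finset.sum_le_sum fun G _ => ?_
  have hw := ewt_nonneg F h0 h1 G
  split_ifs with hQ
  · by_cases hG : G ≤ F
    · nlinarith [h G hG hQ]
    · simp [ewt, hG]
  · exact mul_nonneg hw (hφ G)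

/-- The union bound in the form needed for the union of four bad events. -/
lemma PF_compl_ge (F : SimpleGraph (Fin n)) {q : ℝ} (h0 : 0 ≤ q) (h1 : q ≤ 1)
    {Q B₁ B₂ B₃ B₄ : SimpleGraph (Fin n) → Prop}
    (h : ∀ G, G ≤ F → ¬ B₁ G → ¬ B₂ G → ¬ B₃ G → ¬ B₄ G → Q G) :
    1 - (PF F q B₁ + PF F q B₂ + PF F q B₃ + PF F q B₄) ≤ PF F q Q := by
  have hE := Ew_one F q
  unfold Ew at hE
  unfold PF
  rw [← hE, ← Finset.sum_add_distrib, ← Finset.sum_add_distrib, ← Finset.sum_add_distrib,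
    ← Finset.sum_sub_distrib]
  refine Finset.sum_le_sum fun G _ => ?_
  have hw := ewt_nonneg F h0 h1 G
  by_cases hG : G ≤ F
  · have := h G hG
    by_cases h1 : B₁ G <;> by_cases h2 : B₂ G <;> by_cases h3 : B₃ G <;> by_cases h4 : B₄ G <;>
      by_cases hq : Q G <;> simp_all <;> linarith
  · simp [ewt, hG]

lemma PF_top (p : ℝ) (Q : SimpleGraph (Fin n) → Prop) : Pr n p Q = PF ⊤ p Q := by
  unfold Pr PF
  refine Finset.sum_congr rfl fun G _ => ?_
  have h1 : G.edgeSet.ncard = G.edgeFinset.card := by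
    rw [← SimpleGraph.coe_edgeFinset, Set.ncard_coe_finset]
  have h2 : (⊤ : SimpleGraph (Fin n)).edgeFinset.card = n.choose 2 := by
    have := SimpleGraph.card_edgeFinset_top_eq_card_choose_two (V := Fin n)
    rw [Fintype.card_fin] at this
    convert this
  have h3 : weight n p G = ewt ⊤ p G := by
    rw [ewt, if_pos le_top, weight, h1, ← h2]
    congr!
  rw [h3]

/-- The number of pairs in `D` that are adjacent in `G`.  With `D = X ×ˢ Y` this counts the
edges between `X` and `Y`, those inside `X ∩ Y` twice. -/
noncomputable def cnt (G : SimpleGraph (Fin n)) (D : Finset (Fin n × Fin n)) : ℕ :=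
  (D.filter fun z => G.Adj z.1 z.2).card

/-- The number of pairs in `D` that represent the edge `e`. -/
noncomputable def mult (D : Finset (Fin n × Fin n)) (e : Sym2 (Fin n)) : ℕ :=
  (D.filter fun z => s(z.1, z.2) = e).card

lemma mult_le_two (D : Finset (Fin n × Fin n)) (e : Sym2 (Fin n)) : mult D e ≤ 2 := by
  induction e using Sym2.ind with
  | _ a b =>
    have : (D.filter fun z => s(z.1, z.2) = s(a, b)) ⊆ {(a, b), (b, a)} := by
      intro z hz
      simp only [Finset.mem_filter, Sym2.eq_iff] at hz
      simp only [Finset.mem_insert, Finset.mem_singleton, Prod.ext_iff]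
      exact hz.2
    exact (Finset.card_le_card this).trans Finset.card_le_two

lemma cnt_eq (G : SimpleGraph (Fin n)) (D : Finset (Fin n × Fin n)) :
    cnt G D = ∑ e ∈ G.edgeFinset, mult D e := by
  unfold cnt mult
  rw [Finset.card_eq_sum_card_fiberwise (f := fun z : Fin n × Fin n => s(z.1, z.2))
    (t := G.edgeFinset)]
  · refine Finset.sum_congr rfl fun e he => ?_
    congr 1
    ext z
    simp only [Finset.mem_filter]
    constructor
    · rintro ⟨⟨h1, _⟩, h2⟩; exact ⟨h1, h2⟩
    · rintro ⟨h1, h2⟩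
      refine ⟨⟨h1, ?_⟩, h2⟩
      rw [← h2] at he
      simpa using he
  · intro z hz
    simp only [Finset.coe_filter, Set.mem_ofPred_eq] at hz
    simpa using hz.2

lemma exp_cnt (G : SimpleGraph (Fin n)) (D : Finset (Fin n × Fin n)) (l : ℝ) :
    Real.exp (l * cnt G D) = ∏ e ∈ G.edgeFinset, Real.exp (l * mult D e) := by
  rw [cnt_eq, ← Real.exp_sum, ← Finset.mul_sum]
  push_cast
  rfl

lemma exp_mult_upper {l : ℝ} (h0 : 0 ≤ l) (h1 : l ≤ 1 / 2) {m : ℕ} (hm : m ≤ 2) :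
    Real.exp (l * m) - 1 ≤ (l + 2 * l ^ 2) * m := by
  have hm' : (m : ℝ) ≤ 2 := by exact_mod_cast hm
  have hm0 : (0 : ℝ) ≤ m := Nat.cast_nonneg m
  have hx : |l * m| ≤ 1 := by rw [abs_of_nonneg (by positivity)]; nlinarith
  have := Real.abs_exp_sub_one_sub_id_le hx
  have := (abs_le.mp this).2
  nlinarith [mul_nonneg (mul_nonneg (sq_nonneg l) hm0) (by linarith : 0 ≤ 2 - (m : ℝ))]

lemma exp_mult_lower {l : ℝ} (h0 : 0 ≤ l) (h1 : l ≤ 1 / 2) {m : ℕ} (hm : m ≤ 2) :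
    Real.exp (-l * m) - 1 ≤ -(l - 2 * l ^ 2) * m := by
  have hm' : (m : ℝ) ≤ 2 := by exact_mod_cast hm
  have hm0 : (0 : ℝ) ≤ m := Nat.cast_nonneg m
  have hx : |-l * m| ≤ 1 := by
    rw [neg_mul, abs_neg, abs_of_nonneg (by positivity)]; nlinarith
  have := Real.abs_exp_sub_one_sub_id_le hx
  have := (abs_le.mp this).2
  nlinarith [mul_nonneg (mul_nonneg (sq_nonneg l) hm0) (by linarith : 0 ≤ 2 - (m : ℝ))]

/-- Product form of an exponential moment bound. -/
lemma prod_le_exp (s : Finset (Sym2 (Fin n))) {q a : ℝ} (h0 : 0 ≤ q) (h1 : q ≤ 1)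
    (x : Sym2 (Fin n) → ℝ) (m : Sym2 (Fin n) → ℕ) (hx0 : ∀ e, 0 ≤ x e)
    (hx : ∀ e, x e - 1 ≤ a * m e) :
    ∏ e ∈ s, (q * x e + (1 - q)) ≤ Real.exp (q * a * ∑ e ∈ s, (m e : ℝ)) := by
  rw [Finset.mul_sum, Real.exp_sum]
  refine Finset.prod_le_prod (fun e _ => ?_) (fun e _ => ?_)
  · nlinarith [mul_nonneg h0 (hx0 e)]
  · have := Real.add_one_le_exp (q * a * m e)
    nlinarith [mul_le_mul_of_nonneg_left (hx e) h0]

lemma Ew_upper (F : SimpleGraph (Fin n)) {q l : ℝ} (h0 : 0 ≤ q) (h1 : q ≤ 1) (hl0 : 0 ≤ l)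
    (hl1 : l ≤ 1 / 2) (D : Finset (Fin n × Fin n)) :
    Ew F q (fun G => Real.exp (l * cnt G D)) ≤ Real.exp (q * (l + 2 * l ^ 2) * cnt F D) := by
  simp only [exp_cnt _ D l]
  rw [Ew_prod]
  refine (prod_le_exp _ h0 h1 _ (mult D) (fun e => (Real.exp_pos _).le)
    (fun e => exp_mult_upper hl0 hl1 (mult_le_two D e))).trans_eq ?_
  rw [cnt_eq]; push_cast; rfl

lemma Ew_lower (F : SimpleGraph (Fin n)) {q l : ℝ} (h0 : 0 ≤ q) (h1 : q ≤ 1) (hl0 : 0 ≤ l)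
    (hl1 : l ≤ 1 / 2) (D : Finset (Fin n × Fin n)) :
    Ew F q (fun G => Real.exp (-l * cnt G D)) ≤
      Real.exp (q * -(l - 2 * l ^ 2) * cnt F D) := by
  simp only [exp_cnt _ D (-l)]
  rw [Ew_prod]
  refine (prod_le_exp _ h0 h1 _ (mult D) (fun e => (Real.exp_pos _).le)
    (fun e => exp_mult_lower hl0 hl1 (mult_le_two D e))).trans_eq ?_
  rw [cnt_eq]; push_cast; rfl

end Probability

/-! ### Typical properties of random subgraphs -/

section Tails

open scoped Classical

variable {n : ℕ}

/-- Edge counts between all pairs of vertex sets are bounded from above, with an error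
linear in `n`. -/
lemma PF_upper (F : SimpleGraph (Fin n)) {q l : ℝ} (h0 : 0 ≤ q) (h1 : q ≤ 1) (hl0 : 0 < l)
    (hl1 : l ≤ 1 / 2) :
    PF F q (fun G => ∃ X Y : Finset (Fin n),
      q * (1 + 2 * l) * cnt F (X ×ˢ Y) + 2 * n / l < cnt G (X ×ˢ Y)) ≤
      4 ^ n * Real.exp (-2 * n) := by
  let φ : Finset (Fin n) × Finset (Fin n) → SimpleGraph (Fin n) → ℝ := fun Z G =>
    Real.exp (-(q * (l + 2 * l ^ 2) * cnt F (Z.1 ×ˢ Z.2) + 2 * n)) *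
      Real.exp (l * cnt G (Z.1 ×ˢ Z.2))
  have hφ : ∀ Z G, 0 ≤ φ Z G := fun Z G => by positivity
  refine (PF_le_Ew F h0 h1 (φ := fun G => ∑ Z, φ Z G)
    (fun G => Finset.sum_nonneg fun Z _ => hφ Z G) ?_).trans ?_
  · rintro G _ ⟨X, Y, h⟩
    refine le_trans ?_ (Finset.single_le_sum (f := fun Z => φ Z G) (fun Z _ => hφ Z G)
      (Finset.mem_univ (X, Y)))
    simp only [φ, ← Real.exp_add]
    refine Real.one_le_exp ?_
    have h2 := mul_lt_mul_of_pos_left h hl0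
    have : l * (2 * n / l) = 2 * n := by field_simp
    nlinarith
  · rw [Ew_sum]
    calc ∑ Z, Ew F q (φ Z) ≤ ∑ Z : Finset (Fin n) × Finset (Fin n), Real.exp (-2 * n) := by
          refine Finset.sum_le_sum fun Z _ => ?_
          simp only [φ]
          rw [Ew_mul]
          refine (mul_le_mul_of_nonneg_left (Ew_upper F h0 h1 hl0.le hl1 _)
            (Real.exp_pos _).le).trans_eq ?_
          rw [← Real.exp_add]; congr 1; ring
      _ = _ := by
          simp only [Finset.sum_const, Finset.card_univ, Fintype.card_prod, Fintype.card_finset,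
            Fintype.card_fin, nsmul_eq_mul, Nat.cast_mul, Nat.cast_pow, Nat.cast_ofNat]
          rw [← mul_pow]; norm_num

lemma sum_pow_card (n : ℕ) (x : ℝ) : ∑ X : Finset (Fin n), x ^ X.card = (1 + x) ^ n := by
  have := Fintype.sum_pow_mul_eq_add_pow (Fin n) x (1 : ℝ)
  simp only [one_pow, mul_one, Fintype.card_fin] at this
  rw [this, add_comm]

/-- Edge counts between all pairs of vertex sets are bounded from above, with an error proportional
to the sizes of the sets times `log n`; this is useful for small sets. -/
lemma PF_log (F : SimpleGraph (Fin n)) {q : ℝ} (h0 : 0 ≤ q) (h1 : q ≤ 1) (hn : 1 ≤ n) :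
    PF F q (fun G => ∃ X Y : Finset (Fin n),
      2 * q * cnt F (X ×ˢ Y) + 2 * (X.card + Y.card + 1) * Real.log n < cnt G (X ×ˢ Y)) ≤
      Real.exp 2 / n := by
  have hn' : (0 : ℝ) < n := by exact_mod_cast hn
  let φ : Finset (Fin n) × Finset (Fin n) → SimpleGraph (Fin n) → ℝ := fun Z G =>
    Real.exp (-(q * cnt F (Z.1 ×ˢ Z.2) + (Z.1.card + Z.2.card + 1) * Real.log n)) *
      Real.exp (1 / 2 * cnt G (Z.1 ×ˢ Z.2))
  have hφ : ∀ Z G, 0 ≤ φ Z G := fun Z G => by positivity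
  refine (PF_le_Ew F h0 h1 (φ := fun G => ∑ Z, φ Z G)
    (fun G => Finset.sum_nonneg fun Z _ => hφ Z G) ?_).trans ?_
  · rintro G _ ⟨X, Y, h⟩
    refine le_trans ?_ (Finset.single_le_sum (f := fun Z => φ Z G) (fun Z _ => hφ Z G)
      (Finset.mem_univ (X, Y)))
    simp only [φ, ← Real.exp_add]
    refine Real.one_le_exp ?_
    nlinarith
  · rw [Ew_sum]
    calc ∑ Z, Ew F q (φ Z) ≤ ∑ Z : Finset (Fin n) × Finset (Fin n),
            (1 / (n : ℝ)) * ((1 / n) ^ Z.1.card * (1 / n) ^ Z.2.card) := by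
          refine Finset.sum_le_sum fun Z _ => ?_
          simp only [φ]
          rw [Ew_mul]
          refine (mul_le_mul_of_nonneg_left (Ew_upper F h0 h1 (by norm_num) le_rfl _)
            (Real.exp_pos _).le).trans_eq ?_
          rw [← Real.exp_add, ← pow_add, ← pow_succ']
          have : (1 / (n : ℝ)) = Real.exp (- Real.log n) := by
            rw [Real.exp_neg, Real.exp_log hn', one_div]
          rw [this, ← Real.exp_nat_mul]
          congr 1; push_cast; ring
      _ = (1 / (n : ℝ)) * ((1 + 1 / n) ^ n * (1 + 1 / n) ^ n) := by
          rw [← Finset.mul_sum, ← sum_pow_card, Fintype.sum_prod_type, Finset.sum_mul_sum]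
      _ ≤ (1 / (n : ℝ)) * (Real.exp 1 * Real.exp 1) := by
          have : (1 + 1 / (n : ℝ)) ^ n ≤ Real.exp 1 := by
            calc (1 + 1 / (n : ℝ)) ^ n ≤ (Real.exp (1 / n)) ^ n := by
                  gcongr
                  linarith [Real.add_one_le_exp (1 / (n : ℝ))]
              _ = Real.exp 1 := by
                  rw [← Real.exp_nat_mul]; congr 1; field_simp
          gcongr
      _ = _ := by rw [← Real.exp_add]; norm_num; ring

/-- All degrees are bounded from below. -/
lemma PF_deg (F : SimpleGraph (Fin n)) {q l : ℝ} (h0 : 0 ≤ q) (h1 : q ≤ 1) (hl0 : 0 < l)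
    (hl1 : l ≤ 1 / 2) (hn : 1 ≤ n) :
    PF F q (fun G => ∃ x : Fin n,
      (cnt G ({x} ×ˢ Finset.univ) : ℝ) <
        q * (1 - 2 * l) * cnt F ({x} ×ˢ Finset.univ) - 2 * Real.log n / l) ≤ 1 / n := by
  have hn' : (0 : ℝ) < n := by exact_mod_cast hn
  let φ : Fin n → SimpleGraph (Fin n) → ℝ := fun x G =>
    Real.exp (q * (l - 2 * l ^ 2) * cnt F ({x} ×ˢ Finset.univ) - 2 * Real.log n) *
      Real.exp (-l * cnt G ({x} ×ˢ Finset.univ))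
  have hφ : ∀ Z G, 0 ≤ φ Z G := fun Z G => by positivity
  refine (PF_le_Ew F h0 h1 (φ := fun G => ∑ Z, φ Z G)
    (fun G => Finset.sum_nonneg fun Z _ => hφ Z G) ?_).trans ?_
  · rintro G _ ⟨x, h⟩
    refine le_trans ?_ (Finset.single_le_sum (f := fun Z => φ Z G) (fun Z _ => hφ Z G)
      (Finset.mem_univ x))
    simp only [φ, ← Real.exp_add]
    refine Real.one_le_exp ?_
    have h2 := mul_lt_mul_of_pos_left h hl0
    have : l * (2 * Real.log n / l) = 2 * Real.log n := by field_simp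
    nlinarith
  · rw [Ew_sum]
    calc ∑ Z, Ew F q (φ Z) ≤ ∑ Z : Fin n, (1 / (n : ℝ) ^ 2) := by
          refine Finset.sum_le_sum fun Z _ => ?_
          simp only [φ]
          rw [Ew_mul]
          refine (mul_le_mul_of_nonneg_left (Ew_lower F h0 h1 hl0.le hl1 _)
            (Real.exp_pos _).le).trans_eq ?_
          rw [← Real.exp_add]
          have : (1 / (n : ℝ) ^ 2) = Real.exp (- (2 * Real.log n)) := by
            rw [Real.exp_neg, two_mul, Real.exp_add, Real.exp_log hn', one_div, sq]
          rw [this]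
          congr 1; ring
      _ = 1 / n := by
          simp only [Finset.sum_const, Finset.card_univ, Fintype.card_fin, nsmul_eq_mul]
          field_simp

end Tails

/-! ### Edges into prescribed targets, uniformly over sparse subgraphs -/

section Boosters

open scoped Classical

variable {n : ℕ}

lemma sum_pow_edges {F : SimpleGraph (Fin n)} (hF : F = ⊤) (x : ℝ) :
    ∑ G : SimpleGraph (Fin n), x ^ G.edgeFinset.card =
      (1 + x) ^ F.edgeFinset.card := by
  have h := Ew_prod F (1 / 2) (fun _ => x)
  simp only [Finset.prod_const] at h
  have h2 : Ew F (1 / 2) (fun G => x ^ G.edgeFinset.card) =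
      (1 / 2) ^ F.edgeFinset.card *
        ∑ G : SimpleGraph (Fin n), x ^ G.edgeFinset.card := by
    unfold Ew
    rw [Finset.mul_sum]
    refine Finset.sum_congr rfl fun G _ => ?_
    rw [ewt, if_pos (hF ▸ le_top)]
    have hle : G.edgeFinset.card ≤ F.edgeFinset.card :=
      Finset.card_le_card (SimpleGraph.edgeFinset_mono (hF ▸ le_top))
    have : ((1 : ℝ) - 1 / 2) = 1 / 2 := by norm_num
    rw [this, ← pow_add, Nat.add_sub_cancel' hle]
  rw [h2] at h
  have h3 : ((1 : ℝ) / 2 * x + (1 - 1 / 2)) = 1 / 2 * (1 + x) := by ring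
  rw [h3, mul_pow] at h
  exact mul_left_cancel₀ (pow_ne_zero _ (by norm_num)) h

lemma card_edges_top_le {F : SimpleGraph (Fin n)} (hF : F = ⊤) :
    (2 : ℝ) * F.edgeFinset.card ≤ (n : ℝ) ^ 2 := by
  have h2 : F.edgeFinset.card = n.choose 2 := by
    have := SimpleGraph.card_edgeFinset_top_eq_card_choose_two (V := Fin n)
    rw [Fintype.card_fin] at this
    subst hF
    convert this
  rw [h2, Nat.cast_choose_two]
  nlinarith [(Nat.cast_nonneg n : (0 : ℝ) ≤ n)]

/-- The pairs `(v, w)` with `v ∈ S` and `w ∈ T v`. -/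
noncomputable def pairSet (S : Finset (Fin n)) (T : Fin n → Finset (Fin n)) :
    Finset (Fin n × Fin n) :=
  (S ×ˢ Finset.univ).filter fun z => z.2 ∈ T z.1

lemma cnt_pairSet (G : SimpleGraph (Fin n)) (S : Finset (Fin n)) (T : Fin n → Finset (Fin n)) :
    cnt G (pairSet S T) = ∑ v ∈ S, ((T v).filter fun w => G.Adj v w).card := by
  unfold cnt pairSet
  rw [Finset.card_eq_sum_card_fiberwise (f := Prod.fst) (t := S)]
  · refine Finset.sum_congr rfl fun v hv => ?_
    refine Finset.card_bij' (fun z _ => z.2) (fun w _ => (v, w)) ?_ ?_ ?_ ?_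
    · intro z hz
      simp only [Finset.mem_filter, Finset.mem_product, Finset.mem_univ, and_true] at hz ⊢
      obtain ⟨⟨⟨_, h1⟩, h2⟩, rfl⟩ := hz
      exact ⟨h1, h2⟩
    · intro w hw
      simp only [Finset.mem_filter, Finset.mem_product, Finset.mem_univ, and_true] at hw ⊢
      exact ⟨⟨hv, hw.1⟩, hw.2⟩
    · intro z hz
      simp only [Finset.mem_filter] at hz
      exact Prod.ext hz.2.symm rfl
    · intro w hw; rfl
  · intro z hz
    simp only [Finset.coe_filter, Set.mem_ofPred_eq, Finset.mem_filter, Finset.mem_product] at hz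
    exact hz.1.1.1

lemma cnt_top_pairSet {F : SimpleGraph (Fin n)} (hF : F = ⊤) (S : Finset (Fin n)) (T : Fin n → Finset (Fin n))
    (hT : ∀ v ∈ S, (n : ℝ) / 2 ≤ (T v).card) :
    (S.card : ℝ) * (n / 2 - 1) ≤ cnt F (pairSet S T) := by
  rw [cnt_pairSet]
  push_cast
  rw [← nsmul_eq_mul, ← Finset.sum_const]
  refine Finset.sum_le_sum fun v hv => ?_
  have h1 : (T v).erase v ⊆ (T v).filter fun w => F.Adj v w := by
    intro w hw
    simp only [Finset.mem_erase] at hw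
    simp only [Finset.mem_filter, hF, SimpleGraph.top_adj]
    exact ⟨hw.2, fun h => hw.1 h.symm⟩
  have h2 := Finset.card_le_card h1
  have h3 := Finset.pred_card_le_card_erase (s := T v) (a := v)
  have h4 : (T v).card ≤ ((T v).filter fun w => F.Adj v w).card + 1 := by
    omega
  have h5 : ((T v).card : ℝ) ≤
      ((T v).filter fun w => F.Adj v w).card + 1 := by exact_mod_cast h4
  linarith [hT v hv]

/-- Exponential moment restricted to the event that the sparse graph `Γ` is present.  The
indicator of `Γ ≤ G` is dominated by giving each present edge of `Γ` the weight `1 / p`. -/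
lemma Ew_sparse {F : SimpleGraph (Fin n)} (hF : F = ⊤) {p l : ℝ} (h0 : 0 < p) (h1 : p ≤ 1)
    (hl0 : 0 ≤ l) (hl1 : l ≤ 1 / 2)
    (Γ : SimpleGraph (Fin n)) (D : Finset (Fin n × Fin n)) :
    Ew F p (fun G => if Γ ≤ G then Real.exp (-l * cnt G D) else 0) ≤
      (2 * p) ^ Γ.edgeFinset.card *
        Real.exp (-(p * (l - 2 * l ^ 2)) * cnt F D + 2 * l * Γ.edgeFinset.card) := by
  let x : Sym2 (Fin n) → ℝ := fun e =>
    Real.exp (-l * mult D e) * (if e ∈ Γ.edgeFinset then 1 / p else 1)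
  have hx0 : ∀ e, 0 ≤ x e := fun e => by
    simp only [x]; split_ifs <;> positivity
  have hstep : Ew F p (fun G => if Γ ≤ G then Real.exp (-l * cnt G D) else 0) ≤
      Ew F p (fun G => p ^ Γ.edgeFinset.card * ∏ e ∈ G.edgeFinset, x e) := by
    refine Ew_mono _ h0.le h1 fun G _ => ?_
    split_ifs with hG
    · simp only [x]
      rw [Finset.prod_mul_distrib, ← exp_cnt, Finset.prod_ite, Finset.prod_const,
        Finset.prod_const_one, mul_one]
      have : (G.edgeFinset.filter fun e => e ∈ Γ.edgeFinset) = Γ.edgeFinset := by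
        ext e
        simp only [Finset.mem_filter, SimpleGraph.mem_edgeFinset]
        exact ⟨fun h => h.2, fun h => ⟨SimpleGraph.edgeSet_mono hG h, h⟩⟩
      rw [this, one_div, inv_pow]
      have : p ^ Γ.edgeFinset.card ≠ 0 := by positivity
      rw [mul_comm (Real.exp _), mul_inv_cancel_left₀ this]
    · exact mul_nonneg (by positivity) (Finset.prod_nonneg fun e _ => hx0 e)
  refine hstep.trans ?_
  rw [Ew_mul, Ew_prod, mul_pow, mul_comm ((2 : ℝ) ^ _), mul_assoc]
  refine mul_le_mul_of_nonneg_left ?_ (by positivity)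
  -- edges of `Γ` contribute a factor at most `2`, all other edges the usual one
  set a := l - 2 * l ^ 2 with ha
  have ha0 : 0 ≤ a := by rw [ha]; nlinarith
  have hal : a ≤ l := by rw [ha]; nlinarith [sq_nonneg l]
  have hfac : ∀ e, p * x e + (1 - p) ≤
      (if e ∈ Γ.edgeFinset then 2 * Real.exp (2 * l) else 1) *
        Real.exp (-(p * a) * mult D e) := by
    intro e
    have hm : (mult D e : ℝ) ≤ 2 := by exact_mod_cast mult_le_two D e
    have hm0 : (0 : ℝ) ≤ mult D e := Nat.cast_nonneg _
    simp only [x]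
    split_ifs with he
    · have h2 : Real.exp (-l * mult D e) ≤ 1 := Real.exp_le_one_iff.mpr (by nlinarith)
      have h3 : 1 ≤ Real.exp (2 * l) * Real.exp (-(p * a) * mult D e) := by
        rw [← Real.exp_add]
        refine Real.one_le_exp ?_
        have : p * a ≤ l := by nlinarith
        nlinarith [mul_nonneg h0.le ha0]
      have : p * (Real.exp (-l * mult D e) * (1 / p)) = Real.exp (-l * mult D e) := by
        field_simp
      rw [this]; nlinarith
    · have h4 := exp_mult_lower hl0 hl1 (mult_le_two D e)
      have h5 := Real.add_one_le_exp (-(p * a) * mult D e)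
      rw [mul_one, one_mul]
      nlinarith [mul_le_mul_of_nonneg_left h4 h0.le]
  calc ∏ e ∈ F.edgeFinset, (p * x e + (1 - p))
      ≤ ∏ e ∈ F.edgeFinset,
        ((if e ∈ Γ.edgeFinset then 2 * Real.exp (2 * l) else 1) *
          Real.exp (-(p * a) * mult D e)) :=
        Finset.prod_le_prod (fun e _ => by nlinarith [mul_nonneg h0.le (hx0 e)])
          (fun e _ => hfac e)
    _ = _ := by
      rw [Finset.prod_mul_distrib, ← exp_cnt, Finset.prod_ite, Finset.prod_const,
        Finset.prod_const_one, mul_one]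
      have : (F.edgeFinset.filter fun e => e ∈ Γ.edgeFinset) =
          Γ.edgeFinset := by
        ext e
        simp only [Finset.mem_filter, SimpleGraph.mem_edgeFinset]
        exact ⟨fun h => h.2, fun h => ⟨SimpleGraph.edgeSet_mono (hF ▸ le_top) h, h⟩⟩
      rw [this, mul_pow, ← Real.exp_nat_mul, mul_assoc, ← Real.exp_add]
      congr 2; ring

/-- A union bound over all sparse subgraphs `Γ` of the random graph: for any assignment of
target sets `T Γ v` depending on `Γ` only, no large set of vertices `v` with large `T Γ v` sends
unusually few edges into these targets. -/
lemma PF_boost {F : SimpleGraph (Fin n)} (hF : F = ⊤) {p l κ μ θ : ℝ} (h0 : 0 < p) (h1 : p ≤ 1)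
    (hl0 : 0 < l) (hl1 : l ≤ 1 / 2)
    (hn : 4 ≤ n) (hθ : 0 ≤ θ) (hpar : (θ + 2 * l) * μ + Real.exp (-θ) ≤ l ^ 2 * κ / 4)
    (T : SimpleGraph (Fin n) → Fin n → Finset (Fin n)) :
    PF F p (fun G => ∃ Γ ≤ G, (Γ.edgeFinset.card : ℝ) ≤ μ * (n ^ 2 * p) ∧
      ∃ S : Finset (Fin n), κ * n ≤ S.card ∧ (∀ v ∈ S, (n : ℝ) / 2 ≤ (T Γ v).card) ∧
        (cnt G (pairSet S (T Γ)) : ℝ) < (1 - 4 * l) * p * cnt F (pairSet S (T Γ))) ≤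
      2 ^ n * Real.exp (-(l ^ 2 * κ / 4) * (n ^ 2 * p)) := by
  have hn4 : (4 : ℝ) ≤ n := by exact_mod_cast hn
  set N2 : ℝ := n ^ 2 * p with hN2
  have hN2pos : 0 ≤ N2 := by positivity
  -- admissible pairs `(Γ, S)`
  let adm : SimpleGraph (Fin n) × Finset (Fin n) → Prop := fun Z =>
    (Z.1.edgeFinset.card : ℝ) ≤ μ * N2 ∧ κ * n ≤ Z.2.card ∧
      ∀ v ∈ Z.2, (n : ℝ) / 2 ≤ (T Z.1 v).card
  let ψ : SimpleGraph (Fin n) × Finset (Fin n) → SimpleGraph (Fin n) → ℝ := fun Z G =>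
    Real.exp (l * (1 - 4 * l) * p * cnt F (pairSet Z.2 (T Z.1))) *
      (if Z.1 ≤ G then Real.exp (-l * cnt G (pairSet Z.2 (T Z.1))) else 0)
  let φ : SimpleGraph (Fin n) × Finset (Fin n) → SimpleGraph (Fin n) → ℝ := fun Z G =>
    if adm Z then ψ Z G else 0
  have hφ : ∀ Z G, 0 ≤ φ Z G := fun Z G => by
    simp only [φ, ψ]; split_ifs <;> positivity
  refine (PF_le_Ew F h0.le h1 (φ := fun G => ∑ Z, φ Z G)
    (fun G => Finset.sum_nonneg fun Z _ => hφ Z G) ?_).trans ?_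
  · rintro G _ ⟨Γ, hΓ, hcard, S, hS, hT, h⟩
    refine le_trans ?_ (Finset.single_le_sum (f := fun Z => φ Z G) (fun Z _ => hφ Z G)
      (Finset.mem_univ (Γ, S)))
    have hadm : adm (Γ, S) := ⟨hcard, hS, hT⟩
    simp only [φ, ψ, if_pos hadm, if_pos hΓ, ← Real.exp_add]
    refine Real.one_le_exp ?_
    nlinarith
  · rw [Ew_sum]
    calc ∑ Z, Ew F p (φ Z) ≤ ∑ Z : SimpleGraph (Fin n) × Finset (Fin n),
            Real.exp ((θ + 2 * l) * μ * N2 - l ^ 2 * κ / 2 * N2) *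
              (2 * p * Real.exp (-θ)) ^ Z.1.edgeFinset.card := by
          refine Finset.sum_le_sum fun Z _ => ?_
          by_cases hadm : adm Z
          · have hφψ : φ Z = ψ Z := by funext G; simp only [φ, if_pos hadm]
            rw [hφψ]
            simp only [ψ]
            rw [Ew_mul]
            refine (mul_le_mul_of_nonneg_left (Ew_sparse hF h0 h1 hl0.le hl1 _ _)
              (Real.exp_pos _).le).trans ?_
            rw [mul_pow _ (Real.exp (-θ)), mul_left_comm, mul_left_comm (Real.exp _) ((2 * p) ^ _)]
            refine mul_le_mul_of_nonneg_left ?_ (by positivity)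
            rw [← Real.exp_nat_mul, ← Real.exp_add, ← Real.exp_add]
            refine Real.exp_le_exp.mpr ?_
            obtain ⟨hc, hS, hT⟩ := hadm
            have hM := cnt_top_pairSet hF Z.2 (T Z.1) hT
            set M : ℝ := (cnt F (pairSet Z.2 (T Z.1)) : ℝ)
            have hM2 : κ * n ^ 2 / 4 ≤ M := by
              have : κ * n * (n / 2 - 1) ≤ M :=
                (mul_le_mul_of_nonneg_right hS (by linarith)).trans hM
              by_cases hκ : 0 ≤ κ
              · nlinarith [mul_nonneg hκ (by linarith : (0 : ℝ) ≤ n)]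
              · have : 0 ≤ M := Nat.cast_nonneg _
                nlinarith [sq_nonneg (n : ℝ)]
            have hM3 : l ^ 2 * κ / 2 * N2 ≤ 2 * l ^ 2 * p * M := by
              rw [hN2]
              nlinarith [mul_le_mul_of_nonneg_left hM2 (by positivity : 0 ≤ 2 * l ^ 2 * p)]
            have hc2 : (θ + 2 * l) * Z.1.edgeFinset.card ≤ (θ + 2 * l) * (μ * N2) :=
              mul_le_mul_of_nonneg_left hc (by positivity)
            nlinarith
          · have hφ0 : φ Z = fun _ => 0 := by funext G; simp only [φ, if_neg hadm]
            rw [hφ0]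
            simp only [Ew, mul_zero, Finset.sum_const_zero]
            positivity
      _ = Real.exp ((θ + 2 * l) * μ * N2 - l ^ 2 * κ / 2 * N2) *
            ((1 + 2 * p * Real.exp (-θ)) ^ F.edgeFinset.card * 2 ^ n) := by
          rw [← Finset.mul_sum, Fintype.sum_prod_type]
          rw [← sum_pow_edges hF, Finset.sum_mul]
          refine congrArg _ (Finset.sum_congr rfl fun G _ => ?_)
          have hc : (Finset.univ : Finset (Finset (Fin n))).card = 2 ^ n := by
            rw [Finset.card_univ, Fintype.card_finset, Fintype.card_fin]
          change ∑ _y : Finset (Fin n), (2 * p * Real.exp (-θ)) ^ G.edgeFinset.card = _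
          rw [Finset.sum_const, hc, nsmul_eq_mul, mul_comm]
          push_cast; rfl
      _ ≤ Real.exp ((θ + 2 * l) * μ * N2 - l ^ 2 * κ / 2 * N2) *
            (Real.exp (Real.exp (-θ) * N2) * 2 ^ n) := by
          refine mul_le_mul_of_nonneg_left ?_ (Real.exp_pos _).le
          refine mul_le_mul_of_nonneg_right ?_ (by positivity)
          calc (1 + 2 * p * Real.exp (-θ)) ^ F.edgeFinset.card
              ≤ (Real.exp (2 * p * Real.exp (-θ))) ^
                  F.edgeFinset.card := by
                gcongr
                linarith [Real.add_one_le_exp (2 * p * Real.exp (-θ))]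
            _ ≤ _ := by
                rw [← Real.exp_nat_mul]
                refine Real.exp_le_exp.mpr ?_
                rw [hN2]
                have := mul_le_mul_of_nonneg_right (card_edges_top_le hF)
                  (by positivity : 0 ≤ p * Real.exp (-θ))
                nlinarith
      _ ≤ _ := by
          rw [← mul_assoc, ← Real.exp_add, mul_comm]
          refine mul_le_mul_of_nonneg_left ?_ (by positivity)
          refine Real.exp_le_exp.mpr ?_
          nlinarith [mul_le_mul_of_nonneg_right hpar hN2pos]

end Boosters

/-! ### Paths and rotations -/

section Rotations

open scoped Classical

variable {V : Type*} {Γ : SimpleGraph V} {m : ℕ} {p0 g : ℕ → V}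

/-- The sequence `g 0, …, g (m - 1)` is a path of `Γ` on `m` vertices (the values of `g` from
`m` on are irrelevant). -/
def IsP (Γ : SimpleGraph V) (m : ℕ) (g : ℕ → V) : Prop :=
  (∀ i j, i < m → j < m → g i = g j → i = j) ∧ ∀ i, i + 1 < m → Γ.Adj (g i) (g (i + 1))

/-- No path of `Γ` has more than `m` vertices. -/
def NoLonger (Γ : SimpleGraph V) (m : ℕ) : Prop := ∀ m' g, IsP Γ m' g → m' ≤ m

/-- Reversal of the initial segment `g 0, …, g j`. -/
def rot (j : ℕ) (g : ℕ → V) : ℕ → V := fun i => if i ≤ j then g (j - i) else g i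

/-- The pair `a, b` is a pair of consecutive vertices of `g`, in one of the two orders. -/
def Consec (m : ℕ) (g : ℕ → V) (a b : V) : Prop :=
  ∃ k, k + 1 < m ∧ ((g k = a ∧ g (k + 1) = b) ∨ (g k = b ∧ g (k + 1) = a))

/-- `g` is a path of `Γ` with the same vertices and the same last vertex as `p0`, containing all
but at most `t` of the edges of `p0`. -/
def Good (Γ : SimpleGraph V) (m : ℕ) (p0 : ℕ → V) (t : ℕ) (g : ℕ → V) : Prop :=
  IsP Γ m g ∧ g (m - 1) = p0 (m - 1) ∧ (∀ i < m, ∃ j < m, g i = p0 j) ∧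
    (∀ i < m, ∃ j < m, p0 i = g j) ∧
    ∃ B : Finset ℕ, B.card ≤ t ∧ ∀ i, i + 1 < m → i ∉ B → Consec m g (p0 i) (p0 (i + 1))

lemma IsP.rot {j : ℕ} (hg : IsP Γ m g) (hj : j + 1 < m) (hadj : Γ.Adj (g 0) (g (j + 1))) :
    IsP Γ m (rot j g) := by
  obtain ⟨hinj, hstep⟩ := hg
  refine ⟨fun a b ha hb hab => ?_, fun i hi => ?_⟩
  · unfold Resilience.rot at hab
    split_ifs at hab with h1 h2 h2
    · have := hinj _ _ (by omega) (by omega) hab; omega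
    · have := hinj _ _ (by omega) (by omega) hab; omega
    · have := hinj _ _ (by omega) (by omega) hab; omega
    · exact hinj _ _ ha hb hab
  · unfold Resilience.rot
    rcases lt_trichotomy i j with h | h | h
    · rw [if_pos (by omega), if_pos (by omega)]
      have := hstep (j - (i + 1)) (by omega)
      rw [show j - (i + 1) + 1 = j - i by omega] at this
      exact this.symm
    · subst h
      rw [if_pos le_rfl, if_neg (by omega), Nat.sub_self]
      exact hadj
    · rw [if_neg (by omega), if_neg (by omega)]
      exact hstep i hi

lemma Good.rot {t j : ℕ} (hp0 : IsP Γ m p0) (hg : Good Γ m p0 t g) (hj : j + 1 < m)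
    (hadj : Γ.Adj (g 0) (g (j + 1))) : Good Γ m p0 (t + 1) (rot j g) := by
  obtain ⟨hP, hlast, hs1, hs2, B, hB, hcons⟩ := hg
  refine ⟨hP.rot hj hadj, ?_, ?_, ?_, ?_⟩
  · unfold Resilience.rot; rw [if_neg (by omega)]; exact hlast
  · intro i hi
    unfold Resilience.rot
    split_ifs
    · exact hs1 _ (by omega)
    · exact hs1 _ hi
  · intro i hi
    obtain ⟨k, hk, hik⟩ := hs2 i hi
    by_cases hkj : k ≤ j
    · refine ⟨j - k, by omega, ?_⟩
      unfold Resilience.rot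
      rw [if_pos (by omega), hik]; congr 1; omega
    · refine ⟨k, hk, ?_⟩
      unfold Resilience.rot
      rw [if_neg hkj, hik]
  · -- the only edge of `g` that is lost is the one between positions `j` and `j + 1`
    let bad : ℕ → Prop := fun i => i + 1 < m ∧
      ((g j = p0 i ∧ g (j + 1) = p0 (i + 1)) ∨ (g j = p0 (i + 1) ∧ g (j + 1) = p0 i))
    have key : ∀ i, i + 1 < m → i ∉ B → ¬ bad i → Consec m (Resilience.rot j g) (p0 i)
        (p0 (i + 1)) := by
      intro i hi hiB hbad
      obtain ⟨k, hk, h⟩ := hcons i hi hiB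
      rcases lt_trichotomy k j with hkj | hkj | hkj
      · refine ⟨j - (k + 1), by omega, ?_⟩
        unfold Resilience.rot
        rw [if_pos (by omega), if_pos (by omega), show j - (j - (k + 1)) = k + 1 by omega,
          show j - (j - (k + 1) + 1) = k by omega]
        tauto
      · subst hkj; exact absurd ⟨hi, h⟩ hbad
      · refine ⟨k, hk, ?_⟩
        unfold Resilience.rot
        rw [if_neg (by omega), if_neg (by omega)]
        exact h
    by_cases hex : ∃ i, bad i
    · obtain ⟨i0, hi0⟩ := hex
      refine ⟨insert i0 B, (Finset.card_insert_le _ _).trans (by omega), fun i hi hiB => ?_⟩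
      rw [Finset.mem_insert, not_or] at hiB
      refine key i hi hiB.2 fun hbad => hiB.1 ?_
      obtain ⟨hi0m, h0⟩ := hi0
      obtain ⟨_, h1⟩ := hbad
      rcases h0 with ⟨a0, b0⟩ | ⟨a0, b0⟩ <;> rcases h1 with ⟨a1, b1⟩ | ⟨a1, b1⟩ <;>
        have ha := hp0.1 _ _ (by omega) (by omega) (a0.symm.trans a1) <;>
        have hb := hp0.1 _ _ (by omega) (by omega) (b0.symm.trans b1) <;> omega
    · exact ⟨B, by omega, fun i hi hiB => key i hi hiB fun h => hex ⟨i, h⟩⟩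

lemma Good.mono {s t : ℕ} (hst : s ≤ t) (hg : Good Γ m p0 s g) : Good Γ m p0 t g := by
  obtain ⟨h1, h2, h3, h4, B, hB, h5⟩ := hg
  exact ⟨h1, h2, h3, h4, B, hB.trans hst, h5⟩

lemma Good.self (hp0 : IsP Γ m p0) (t : ℕ) : Good Γ m p0 t p0 :=
  ⟨hp0, rfl, fun i hi => ⟨i, hi, rfl⟩, fun i hi => ⟨i, hi, rfl⟩, ∅, by simp,
    fun i hi _ => ⟨i, hi, Or.inl ⟨rfl, rfl⟩⟩⟩

/-- A path can be prolonged at its head by a vertex outside of it. -/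
lemma IsP.cons (hg : IsP Γ m g) {y : V} (hy : Γ.Adj (g 0) y) (hout : ∀ i < m, g i ≠ y) :
    IsP Γ (m + 1) (fun i => if i = 0 then y else g (i - 1)) := by
  refine ⟨fun a b ha hb hab => ?_, fun i hi => ?_⟩
  · dsimp only at hab
    split_ifs at hab with h1 h2 h2
    · omega
    · exact absurd hab.symm (hout _ (by omega))
    · exact absurd hab (hout _ (by omega))
    · have := hg.1 _ _ (by omega) (by omega) hab; omega
  · dsimp only
    rw [if_neg (by omega : ¬ i + 1 = 0)]
    split_ifs with h
    · subst h; exact hy.symm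
    · have := hg.2 (i - 1) (by omega)
      rw [show i - 1 + 1 = i + 1 - 1 by omega] at this
      exact this

/-- In a longest path, every neighbour of the head is a later vertex of the path. -/
lemma nbr_mem (hmax : NoLonger Γ m) (hg : IsP Γ m g) {y : V}
    (hy : Γ.Adj (g 0) y) : ∃ j, j + 1 < m ∧ y = g (j + 1) := by
  by_contra hcon
  push Not at hcon
  have hout : ∀ i < m, g i ≠ y := by
    intro i hi h
    rcases Nat.eq_zero_or_pos i with h0 | h0
    · subst h0; rw [← h] at hy; exact hy.ne rfl
    · refine hcon (i - 1) (by omega) ?_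
      rw [← h]; congr 1; omega
  have := hmax _ _ (hg.cons hy hout)
  omega

/-- Positions on `p0` of the members of `Y`. -/
noncomputable def posOf (m : ℕ) (p0 : ℕ → V) (Y : Finset V) : Finset ℕ :=
  (Finset.range m).filter fun i => p0 i ∈ Y

lemma card_posOf_le (hp0 : IsP Γ m p0) (Y : Finset V) : (posOf m p0 Y).card ≤ Y.card := by
  refine Finset.card_le_card_of_injOn p0 ?_ ?_
  · intro i hi
    simp only [posOf, Finset.coe_filter, Set.mem_ofPred_eq] at hi
    exact hi.2
  · intro i hi j hj h
    simp only [posOf, Finset.coe_filter, Set.mem_ofPred_eq, Finset.mem_range] at hi hj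
    exact hp0.1 _ _ hi.1 hj.1 h

/-- The neighbours along `p0` of the members of `Y`. -/
noncomputable def nextTo (m : ℕ) (p0 : ℕ → V) (Y : Finset V) : Finset V :=
  (posOf m p0 Y).image (fun i => p0 (i + 1)) ∪ (posOf m p0 Y).image (fun i => p0 (i - 1))

lemma card_nextTo_le (hp0 : IsP Γ m p0) (Y : Finset V) :
    (nextTo m p0 Y).card ≤ 2 * Y.card := by
  have h1 := card_posOf_le hp0 Y
  have h2 := Finset.card_union_le ((posOf m p0 Y).image (fun i => p0 (i + 1)))
    ((posOf m p0 Y).image (fun i => p0 (i - 1)))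
  have h3 := Finset.card_image_le (s := posOf m p0 Y) (f := fun i => p0 (i + 1))
  have h4 := Finset.card_image_le (s := posOf m p0 Y) (f := fun i => p0 (i - 1))
  unfold nextTo
  omega

/-- The positions of the `k`-th block of length `ℓ` on a path with `m` vertices. -/
def block (m ℓ k : ℕ) : Finset ℕ := (Finset.range m).filter fun i => i / ℓ = k

lemma mem_block {m ℓ k i : ℕ} (hℓ : 0 < ℓ) :
    i ∈ block m ℓ k ↔ i < m ∧ k * ℓ ≤ i ∧ i < (k + 1) * ℓ := by
  simp only [block, Finset.mem_filter, Finset.mem_range, and_congr_right_iff]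
  intro _
  rw [Nat.div_eq_iff hℓ]
  constructor
  · rintro ⟨h1, h2⟩; refine ⟨h1, ?_⟩; rw [add_mul]; omega
  · rintro ⟨h1, h2⟩; refine ⟨h1, ?_⟩; rw [add_mul] at h2; omega

/-- Vertices of block `k` that are first in the block or whose predecessor on `p0` is in `Y`. -/
noncomputable def Dplus (m : ℕ) (p0 : ℕ → V) (ℓ : ℕ) (Y : Finset V) (k : ℕ) : Finset V :=
  ((block m ℓ k).filter fun i => i = k * ℓ ∨ p0 (i - 1) ∈ Y).image p0

/-- Vertices of block `k` that are last in the block or whose successor on `p0` is in `Y`. -/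
noncomputable def Dminus (m : ℕ) (p0 : ℕ → V) (ℓ : ℕ) (Y : Finset V) (k : ℕ) : Finset V :=
  ((block m ℓ k).filter fun i => i + 1 ∉ block m ℓ k ∨ p0 (i + 1) ∈ Y).image p0

lemma sign_const {f : ℕ → ℕ} {a b : ℕ}
    (h1 : ∀ i, a ≤ i → i + 1 < b → f (i + 1) = f i + 1 ∨ f i = f (i + 1) + 1)
    (h2 : ∀ i, a ≤ i → i + 2 < b → f i ≠ f (i + 2)) :
    (∀ i, a ≤ i → i + 1 < b → f (i + 1) = f i + 1) ∨
      (∀ i, a ≤ i → i + 1 < b → f i = f (i + 1) + 1) := by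
  by_cases hab : a + 1 < b
  · rcases h1 a le_rfl hab with h | h
    · left
      intro i hi
      induction i, hi using Nat.le_induction with
      | base => exact fun _ => h
      | succ i hi ih =>
        intro hib
        have := ih (by omega)
        have h3 := h1 (i + 1) (by omega) hib
        have h4 : f i ≠ f (i + 1 + 1) := h2 i hi hib
        omega
    · right
      intro i hi
      induction i, hi using Nat.le_induction with
      | base => exact fun _ => h
      | succ i hi ih =>
        intro hib
        have := ih (by omega)
        have h3 := h1 (i + 1) (by omega) hib
        have h4 : f i ≠ f (i + 1 + 1) := h2 i hi hib
        omega
  · left; intro i hi hib; omega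

section Heads

variable [Fintype V]

/-- The heads of the paths obtained from `p0` with at most `t` lost edges. -/
noncomputable def heads (Γ : SimpleGraph V) (m : ℕ) (p0 : ℕ → V) (t : ℕ) : Finset V :=
  Finset.univ.filter fun x => ∃ g, Good Γ m p0 t g ∧ g 0 = x

lemma mem_heads {t : ℕ} {x : V} : x ∈ heads Γ m p0 t ↔ ∃ g, Good Γ m p0 t g ∧ g 0 = x := by
  simp [heads]

lemma heads_mono {s t : ℕ} (hst : s ≤ t) : heads Γ m p0 s ⊆ heads Γ m p0 t := by
  intro x hx
  rw [mem_heads] at hx ⊢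
  obtain ⟨g, hg, h⟩ := hx
  exact ⟨g, hg.mono hst, h⟩

/-- For a neighbour `g (j + 1)` of the head, rotation makes `g j` a head. -/
lemma pred_mem_heads {t j : ℕ} (hp0 : IsP Γ m p0) (hg : Good Γ m p0 t g) (hj : j + 1 < m)
    (hadj : Γ.Adj (g 0) (g (j + 1))) : g j ∈ heads Γ m p0 (t + 1) := by
  rw [mem_heads]
  exact ⟨_, hg.rot hp0 hj hadj, by simp [rot]⟩

/-- All but `2 t + 2` neighbours of a head lie next to a head of the following round. -/
lemma nbrs_split {t : ℕ} (hp0 : IsP Γ m p0) (hmax : NoLonger Γ m) {x : V}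
    (hx : x ∈ heads Γ m p0 t) :
    ∃ Ex : Finset V, Ex.card ≤ 2 * t + 2 ∧
      ∀ y, Γ.Adj x y → y ∈ Ex ∨ y ∈ nextTo m p0 (heads Γ m p0 (t + 1)) := by
  rw [mem_heads] at hx
  obtain ⟨g, hg, rfl⟩ := hx
  obtain ⟨hP, hlast, hs1, hs2, B, hB, hcons⟩ := id hg
  refine ⟨(B.image p0 ∪ B.image (fun i => p0 (i + 1))) ∪ {p0 0, p0 (m - 1)}, ?_, ?_⟩
  · have h1 := Finset.card_union_le (B.image p0 ∪ B.image (fun i => p0 (i + 1)))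
      {p0 0, p0 (m - 1)}
    have h2 := Finset.card_union_le (B.image p0) (B.image (fun i => p0 (i + 1)))
    have h3 := Finset.card_image_le (s := B) (f := p0)
    have h4 := Finset.card_image_le (s := B) (f := fun i => p0 (i + 1))
    have h5 := Finset.card_le_two (a := p0 0) (b := p0 (m - 1))
    omega
  · intro y hy
    obtain ⟨j, hj, hyj⟩ := nbr_mem hmax hP hy
    obtain ⟨i, hi, hyi⟩ := hs1 (j + 1) hj
    rw [← hyj] at hyi
    have hhead : g j ∈ heads Γ m p0 (t + 1) := pred_mem_heads hp0 hg hj (hyj ▸ hy)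
    by_cases hE : i = 0 ∨ i = m - 1 ∨ i ∈ B ∨ (i - 1) ∈ B
    · by_cases h0 : i = 0
      · left; subst h0; simp [hyi]
      left
      rcases hE with h | h | h | h
      · exact absurd h h0
      · subst h; simp [hyi]
      · rw [hyi]
        exact Finset.mem_union_left _ (Finset.mem_union_left _ (Finset.mem_image_of_mem _ h))
      · rw [hyi]
        refine Finset.mem_union_left _ (Finset.mem_union_right _ (Finset.mem_image.mpr
          ⟨i - 1, h, ?_⟩))
        congr 1; omega
    · right
      push Not at hE
      obtain ⟨e1, e2, e3, e4⟩ := hE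
      obtain ⟨k, hk, h⟩ := hcons i (by omega) e3
      obtain ⟨k', hk', h'⟩ := hcons (i - 1) (by omega) e4
      rw [show i - 1 + 1 = i by omega] at h'
      have hpos : ∀ a, a < m → g a = p0 i → a = j + 1 := fun a ha hga =>
        hP.1 _ _ ha hj (by rw [hga, ← hyi, hyj])
      unfold nextTo posOf
      -- one of the two `p0`-neighbours of `y` precedes `y` on `g`
      have hor : g j = p0 (i + 1) ∨ g j = p0 (i - 1) := by
        rcases h with ⟨a, b⟩ | ⟨a, b⟩
        · rcases h' with ⟨a', b'⟩ | ⟨a', b'⟩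
          · have := hpos _ hk' b'
            right; rw [← a']; congr 1; omega
          · have h1 := hpos _ (by omega) a
            have h2 := hpos _ (by omega) a'
            rw [h1] at b; rw [h2] at b'
            have := hp0.1 _ _ (by omega) (by omega) (b.symm.trans b')
            omega
        · have := hpos _ hk b
          left; rw [← a]; congr 1; omega
      rcases hor with h1 | h1
      · refine Finset.mem_union_right _ (Finset.mem_image.mpr ⟨i + 1, ?_, ?_⟩)
        · simp only [Finset.mem_filter, Finset.mem_range]
          exact ⟨by omega, h1 ▸ hhead⟩
        · rw [hyi]; rfl
      · refine Finset.mem_union_left _ (Finset.mem_image.mpr ⟨i - 1, ?_, ?_⟩)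
        · simp only [Finset.mem_filter, Finset.mem_range]
          exact ⟨by omega, h1 ▸ hhead⟩
        · rw [hyi]; congr 1; omega

/-- On a block none of whose edges is lost, the path `g` traverses the block in one direction, so
that all neighbours of the head in the block lie in `Dplus` or all of them lie in `Dminus`. -/
lemma nbrs_block {t ℓ k : ℕ} (hp0 : IsP Γ m p0) (hmax : NoLonger Γ m) (hℓ : 0 < ℓ)
    (hg : Good Γ m p0 t g)
    (hub : ∀ i, i ∈ block m ℓ k → i + 1 < m → Consec m g (p0 i) (p0 (i + 1))) :
    (∀ i ∈ block m ℓ k, Γ.Adj (g 0) (p0 i) → p0 i ∈ Dplus m p0 ℓ (heads Γ m p0 (t + 1)) k) ∨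
    (∀ i ∈ block m ℓ k, Γ.Adj (g 0) (p0 i) →
      p0 i ∈ Dminus m p0 ℓ (heads Γ m p0 (t + 1)) k) := by
  obtain ⟨hP, hlast, hs1, hs2, -⟩ := id hg
  choose! pos hpos hgpos using hs2
  have hmem := fun i => mem_block (m := m) (k := k) (i := i) hℓ
  have huniq : ∀ a i, a < m → i < m → g a = p0 i → a = pos i := fun a i ha hi h =>
    hP.1 _ _ ha (hpos i hi) (by rw [h, hgpos i hi])
  have hpinj : ∀ i j, i < m → j < m → pos i = pos j → i = j := fun i j hi hj h =>
    hp0.1 _ _ hi hj (by rw [hgpos i hi, hgpos j hj, h])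
  have hsign := sign_const (f := pos) (a := k * ℓ) (b := min m ((k + 1) * ℓ))
    (fun i hi hib => by
      obtain ⟨a, ha, h⟩ := hub i ((hmem i).2 (by omega)) (by omega)
      rcases h with ⟨h1, h2⟩ | ⟨h1, h2⟩
      · have := huniq _ _ (by omega) (by omega) h1
        have := huniq _ _ (by omega) (by omega) h2
        omega
      · have := huniq _ _ (by omega) (by omega) h1
        have := huniq _ _ (by omega) (by omega) h2
        omega)
    (fun i hi hib h => by have := hpinj _ _ (by omega) (by omega) h; omega)
  have hpred : ∀ i, i < m → Γ.Adj (g 0) (p0 i) →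
      ∃ j, pos i = j + 1 ∧ g j ∈ heads Γ m p0 (t + 1) := by
    intro i hi hadj
    obtain ⟨j, hj, h⟩ := nbr_mem hmax hP hadj
    exact ⟨j, (huniq _ _ hj hi h.symm).symm, pred_mem_heads hp0 hg hj (h ▸ hadj)⟩
  rcases hsign with hs | hs
  · left
    intro i hi hadj
    have hi' := (hmem i).1 hi
    obtain ⟨j, hj, hjh⟩ := hpred i hi'.1 hadj
    refine Finset.mem_image_of_mem _ (Finset.mem_filter.mpr ⟨hi, ?_⟩)
    by_cases hfirst : i = k * ℓ
    · exact Or.inl hfirst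
    · right
      have := hs (i - 1) (by omega) (by omega)
      rw [show i - 1 + 1 = i by omega] at this
      rw [hgpos (i - 1) (by omega), show pos (i - 1) = j by omega]
      exact hjh
  · right
    intro i hi hadj
    have hi' := (hmem i).1 hi
    obtain ⟨j, hj, hjh⟩ := hpred i hi'.1 hadj
    refine Finset.mem_image_of_mem _ (Finset.mem_filter.mpr ⟨hi, ?_⟩)
    by_cases hl : i + 1 ∈ block m ℓ k
    · right
      have hl' := (hmem _).1 hl
      have := hs i (by omega) (by omega)
      rw [hgpos (i + 1) (by omega), show pos (i + 1) = j by omega]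
      exact hjh
    · exact Or.inl hl

end Heads

end Rotations

/-! ### Growth of the set of heads in pseudorandom graphs -/

section Blocks

open scoped Classical

variable {V : Type*} {Γ : SimpleGraph V} {m : ℕ} {p0 : ℕ → V}

lemma card_block_le {ℓ k : ℕ} (hℓ : 0 < ℓ) : (block m ℓ k).card ≤ ℓ := by
  have : block m ℓ k ⊆ Finset.Ico (k * ℓ) ((k + 1) * ℓ) := by
    intro i hi
    rw [mem_block hℓ] at hi
    exact Finset.mem_Ico.mpr hi.2
  refine (Finset.card_le_card this).trans ?_
  rw [Nat.card_Ico, add_mul]; omega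

lemma card_Dplus_le {ℓ k : ℕ} (hℓ : 0 < ℓ) (Y : Finset V) :
    (Dplus m p0 ℓ Y k).card ≤ ((posOf m p0 Y).filter fun i => i / ℓ = k).card + 1 := by
  refine Finset.card_image_le.trans ?_
  have : ((block m ℓ k).filter fun i => i = k * ℓ ∨ p0 (i - 1) ∈ Y) ⊆
      insert (k * ℓ) (((posOf m p0 Y).filter fun i => i / ℓ = k).image (· + 1)) := by
    intro i hi
    obtain ⟨hi, h⟩ := Finset.mem_filter.mp hi
    rw [mem_block hℓ] at hi
    by_cases h0 : i = k * ℓ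
    · exact Finset.mem_insert.mpr (Or.inl h0)
    · refine Finset.mem_insert_of_mem (Finset.mem_image.mpr ⟨i - 1, ?_, by omega⟩)
      have hb : i - 1 ∈ block m ℓ k := (mem_block hℓ).2 (by omega)
      simp only [block, Finset.mem_filter, Finset.mem_range] at hb
      simp only [posOf, Finset.mem_filter, Finset.mem_range]
      exact ⟨⟨hb.1, h.resolve_left h0⟩, hb.2⟩
  refine (Finset.card_le_card this).trans ((Finset.card_insert_le _ _).trans ?_)
  have := Finset.card_image_le (s := (posOf m p0 Y).filter fun i => i / ℓ = k) (f := (· + 1))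
  omega

lemma card_Dminus_le {ℓ k : ℕ} (hℓ : 0 < ℓ) (Y : Finset V) :
    (Dminus m p0 ℓ Y k).card ≤ ((posOf m p0 Y).filter fun i => i / ℓ = k).card + 1 := by
  refine Finset.card_image_le.trans ?_
  have : ((block m ℓ k).filter fun i => i + 1 ∉ block m ℓ k ∨ p0 (i + 1) ∈ Y) ⊆
      insert (min m ((k + 1) * ℓ) - 1)
        (((posOf m p0 Y).filter fun i => i / ℓ = k).image (· - 1)) := by
    intro i hi
    obtain ⟨hi, h⟩ := Finset.mem_filter.mp hi
    by_cases h0 : i + 1 ∈ block m ℓ k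
    · refine Finset.mem_insert_of_mem (Finset.mem_image.mpr ⟨i + 1, ?_, by omega⟩)
      have hb := h0
      simp only [block, Finset.mem_filter, Finset.mem_range] at hb
      simp only [posOf, Finset.mem_filter, Finset.mem_range]
      exact ⟨⟨hb.1, h.resolve_left (fun h => h h0)⟩, hb.2⟩
    · refine Finset.mem_insert.mpr (Or.inl ?_)
      rw [mem_block hℓ] at hi h0
      omega
  refine (Finset.card_le_card this).trans ((Finset.card_insert_le _ _).trans ?_)
  have := Finset.card_image_le (s := (posOf m p0 Y).filter fun i => i / ℓ = k) (f := (· - 1))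
  omega

lemma sum_posOf_le {ℓ : ℕ} (hp0 : IsP Γ m p0) (Y : Finset V) (K : ℕ) :
    ∑ k ∈ Finset.range K, ((posOf m p0 Y).filter fun i => i / ℓ = k).card ≤ Y.card := by
  refine le_trans ?_ (card_posOf_le hp0 Y)
  rw [← Finset.card_biUnion]
  · refine Finset.card_le_card ?_
    intro i hi
    obtain ⟨k, _, hk⟩ := Finset.mem_biUnion.mp hi
    exact (Finset.mem_filter.mp hk).1
  · intro a _ b _ hab
    refine Finset.disjoint_left.mpr fun i hi hi' => hab ?_
    rw [← (Finset.mem_filter.mp hi).2, ← (Finset.mem_filter.mp hi').2]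

end Blocks

section Growth

open scoped Classical

variable {n : ℕ}

/-- Number of neighbours of `x`. -/
noncomputable def dgr (R : SimpleGraph (Fin n)) (x : Fin n) : ℕ :=
  (Finset.univ.filter fun y => R.Adj x y).card

lemma cnt_prod (R : SimpleGraph (Fin n)) (X Y : Finset (Fin n)) :
    cnt R (X ×ˢ Y) = ∑ x ∈ X, (Y.filter fun y => R.Adj x y).card := by
  rw [← cnt_pairSet R X (fun _ => Y)]
  congr 1
  ext z
  simp [pairSet]

/-- The pseudorandomness used for the sparse random subgraph `R` of density about `q`: few vertices
have small degree, and the number of edges between two sets is at most about what it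
should be; `e2` is sharp for linear-sized sets, `e3` is meaningful for small ones. -/
structure PR (R : SimpleGraph (Fin n)) (q ε A B : ℝ) : Prop where
  low : ∀ θ : ℝ, 0 ≤ θ → θ ≤ 1 / 2 →
    ((Finset.univ.filter fun x => (dgr R x : ℝ) < (θ + 3 * ε / 4) * (q * n)).card : ℝ) ≤ θ * n
  e2 : ∀ X Y : Finset (Fin n),
    (cnt R (X ×ˢ Y) : ℝ) ≤ (1 + ε / 20) * q * (X.card * Y.card) + A * n
  e3 : ∀ X Y : Finset (Fin n),
    (cnt R (X ×ˢ Y) : ℝ) ≤ B * q * (X.card * Y.card) + 2 * (X.card + Y.card + 1) * Real.log n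

variable {R Γ : SimpleGraph (Fin n)} {q ε A B c : ℝ} {m : ℕ} {p0 : ℕ → Fin n}

lemma PR.minDeg (h : PR R q ε A B) (x : Fin n) : 3 * ε / 4 * (q * n) ≤ dgr R x := by
  by_contra hcon
  push Not at hcon
  have h0 := h.low 0 le_rfl (by norm_num)
  have h1 : 0 < (Finset.univ.filter fun x => (dgr R x : ℝ) < (0 + 3 * ε / 4) * (q * n)).card :=
    Finset.card_pos.mpr ⟨x, by simpa using hcon⟩
  have h2 : (1 : ℝ) ≤ (Finset.univ.filter fun x =>
    (dgr R x : ℝ) < (0 + 3 * ε / 4) * (q * n)).card := by exact_mod_cast h1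
  linarith

/-- A small set of heads at least doubles with one more rotation. -/
lemma heads_double (h : PR R q ε A B) (hR : R ≤ Γ) (hp0 : IsP Γ m p0) (hmax : NoLonger Γ m)
    {t : ℕ} (hε : 0 < ε) (hB : 0 ≤ B) (hqn : 0 < q * n)
    (ht : (2 * t + 2 : ℝ) ≤ ε / 8 * (q * n)) (hlog : 12 * Real.log n ≤ ε / 8 * (q * n))
    (hc : 4 * B * c ≤ ε / 8) (h1 : 1 ≤ (heads Γ m p0 t).card)
    (hsmall : ((heads Γ m p0 t).card : ℝ) ≤ c * n) :
    2 * (heads Γ m p0 t).card ≤ (heads Γ m p0 (t + 1)).card := by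
  set X := heads Γ m p0 t with hX
  set Y := heads Γ m p0 (t + 1) with hY
  set D := nextTo m p0 Y with hD
  by_contra hcon
  have hD2 : D.card ≤ 2 * Y.card := card_nextTo_le hp0 Y
  have hD4 : (D.card : ℝ) + 1 ≤ 4 * X.card := by
    have : D.card + 1 ≤ 4 * X.card := by omega
    exact_mod_cast this
  have hX1 : (1 : ℝ) ≤ X.card := by exact_mod_cast h1
  have hlow : (X.card : ℝ) * (5 * ε / 8 * (q * n)) ≤ cnt R (X ×ˢ D) := by
    rw [cnt_prod]
    push_cast
    rw [← nsmul_eq_mul, ← Finset.sum_const]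
    refine Finset.sum_le_sum fun x hx => ?_
    obtain ⟨Ex, hEx, hall⟩ := nbrs_split hp0 hmax hx
    have hsub : (Finset.univ.filter fun y => R.Adj x y) ⊆ Ex ∪ D.filter fun y => R.Adj x y := by
      intro y hy
      have hy' := (Finset.mem_filter.mp hy).2
      rcases hall y (hR hy') with h | h
      · exact Finset.mem_union_left _ h
      · exact Finset.mem_union_right _ (Finset.mem_filter.mpr ⟨h, hy'⟩)
    have h3 := (Finset.card_le_card hsub).trans (Finset.card_union_le _ _)
    have h4 : (dgr R x : ℝ) ≤ (2 * t + 2) + (D.filter fun y => R.Adj x y).card := by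
      have : dgr R x ≤ (2 * t + 2) + (D.filter fun y => R.Adj x y).card := by
        unfold dgr; omega
      exact_mod_cast this
    have h5 := h.minDeg x
    linarith
  have hup := h.e3 X D
  have hlogn : 0 ≤ Real.log n := Real.log_natCast_nonneg n
  have hqpos : 0 < q := by
    by_contra hq
    have : q * n ≤ 0 := mul_nonpos_of_nonpos_of_nonneg (by linarith) (Nat.cast_nonneg n)
    linarith
  have h6 : B * q * (X.card * D.card) ≤ X.card * (ε / 8 * (q * n)) := by
    have h7 : (D.card : ℝ) ≤ 4 * (c * n) := by linarith
    have h8 : B * q * (X.card * D.card) ≤ B * q * (X.card * (4 * (c * n))) := by gcongr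
    have h9 := mul_le_mul_of_nonneg_right hc
      (by positivity : 0 ≤ (X.card : ℝ) * (q * n))
    nlinarith
  have h10 : 2 * ((X.card : ℝ) + D.card + 1) * Real.log n ≤ X.card * (ε / 8 * (q * n)) := by
    have : 2 * ((X.card : ℝ) + D.card + 1) * Real.log n ≤ 2 * (6 * X.card) * Real.log n := by
      gcongr; linarith
    nlinarith
  have h11 : 0 < (X.card : ℝ) * (3 * ε / 8 * (q * n)) := by positivity
  nlinarith

/-- Splitting the neighbourhoods of the vertices of `X` into pieces, each inside one of three
candidate sets per block, and applying `e2` to each candidate set. -/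
lemma block_count (h : PR R q ε A B) (X : Finset (Fin n)) (K : ℕ)
    (D : Fin 3 → ℕ → Finset (Fin n)) (σ : Fin n → ℕ → Fin 3) :
    (∑ x ∈ X, ∑ k ∈ Finset.range K, (((D (σ x k) k).filter fun y => R.Adj x y).card : ℝ)) ≤
      (1 + ε / 20) * q * (∑ x ∈ X, ∑ k ∈ Finset.range K, ((D (σ x k) k).card : ℝ)) +
        3 * K * (A * n) := by
  have hsplit : ∀ f : Fin n → Fin 3 → ℕ → ℝ,
      ∑ x ∈ X, ∑ k ∈ Finset.range K, f x (σ x k) k =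
        ∑ k ∈ Finset.range K, ∑ s : Fin 3, ∑ x ∈ X.filter (fun x => σ x k = s), f x s k := by
    intro f
    rw [Finset.sum_comm]
    refine Finset.sum_congr rfl fun k _ => ?_
    rw [← Finset.sum_fiberwise X (fun x => σ x k)]
    refine Finset.sum_congr rfl fun s _ => Finset.sum_congr rfl fun x hx => ?_
    rw [(Finset.mem_filter.mp hx).2]
  rw [hsplit (fun x s k => (((D s k).filter fun y => R.Adj x y).card : ℝ)),
    hsplit (fun x s k => ((D s k).card : ℝ))]
  have hterm : ∀ k s, ∑ x ∈ X.filter (fun x => σ x k = s),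
      (((D s k).filter fun y => R.Adj x y).card : ℝ) ≤
      (1 + ε / 20) * q * (∑ x ∈ X.filter (fun x => σ x k = s), ((D s k).card : ℝ)) + A * n := by
    intro k s
    have := h.e2 (X.filter (fun x => σ x k = s)) (D s k)
    rw [cnt_prod] at this
    push_cast at this
    rw [Finset.sum_const, nsmul_eq_mul]
    exact this
  refine (Finset.sum_le_sum fun k _ => Finset.sum_le_sum fun s _ => hterm k s).trans
    (le_of_eq ?_)
  simp only [Finset.sum_add_distrib, Finset.sum_const, Finset.card_univ, Fintype.card_fin,
    Finset.card_range, nsmul_eq_mul, ← Finset.mul_sum]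
  push_cast
  ring

/-- One more rotation enlarges a linear-sized set of heads, as long as it contains a set
`X` of many vertices of large degree. -/
lemma heads_grow_raw (h : PR R q ε A B) (hR : R ≤ Γ) (hp0 : IsP Γ m p0) (hmax : NoLonger Γ m)
    {t ℓ K : ℕ} (hε : 0 < ε) (hq : 0 ≤ q) (hℓ : 0 < ℓ) (hK : m ≤ K * ℓ) {d : ℝ}
    (X : Finset (Fin n)) (hX : X ⊆ heads Γ m p0 t) (hd : ∀ x ∈ X, d ≤ dgr R x) :
    X.card * d ≤ (1 + ε / 20) * q * (X.card * ((heads Γ m p0 (t + 1)).card + K + t * ℓ)) +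
      3 * K * (A * n) := by
  set Y := heads Γ m p0 (t + 1) with hY
  let D : Fin 3 → ℕ → Finset (Fin n) := fun s k =>
    if s = 0 then Dplus m p0 ℓ Y k else if s = 1 then Dminus m p0 ℓ Y k
      else (block m ℓ k).image p0
  have hex : ∀ x ∈ X, ∃ τ : ℕ → Fin 3,
      ((Finset.range K).filter fun k => τ k = 2).card ≤ t ∧
      ∀ k, ∀ i ∈ block m ℓ k, R.Adj x (p0 i) → p0 i ∈ D (τ k) k := by
    intro x hx
    obtain ⟨g, hg, rfl⟩ := mem_heads.mp (hX hx)
    obtain ⟨-, -, -, -, Bs, hBs, hcons⟩ := id hg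
    have hk : ∀ k, ∃ s : Fin 3, (s = 2 → k ∈ Bs.image (· / ℓ)) ∧
        ∀ i ∈ block m ℓ k, R.Adj (g 0) (p0 i) → p0 i ∈ D s k := by
      intro k
      by_cases hkB : k ∈ Bs.image (· / ℓ)
      · refine ⟨2, fun _ => hkB, fun i hi _ => ?_⟩
        simp only [D]
        exact Finset.mem_image_of_mem _ hi
      · have hub : ∀ i, i ∈ block m ℓ k → i + 1 < m → Consec m g (p0 i) (p0 (i + 1)) := by
          intro i hi him
          refine hcons i him fun hiB => hkB ?_
          have : i / ℓ = k := (Finset.mem_filter.mp hi).2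
          exact Finset.mem_image.mpr ⟨i, hiB, this⟩
        rcases nbrs_block hp0 hmax hℓ hg hub with h0 | h0
        · refine ⟨0, fun h => absurd h (by decide), fun i hi hadj => ?_⟩
          simp only [D, if_true]
          exact h0 i hi (hR hadj)
        · refine ⟨1, fun h => absurd h (by decide), fun i hi hadj => ?_⟩
          simp only [D, if_true, show ¬ (1 : Fin 3) = 0 by decide, if_false]
          exact h0 i hi (hR hadj)
    choose τ hτ1 hτ2 using hk
    refine ⟨τ, ?_, hτ2⟩
    refine le_trans (Finset.card_le_card ?_) 
      ((Finset.card_image_le (s := Bs) (f := (· / ℓ))).trans hBs)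
    intro k hk
    exact hτ1 k (Finset.mem_filter.mp hk).2
  choose! σ hσ1 hσ2 using hex
  have hcount := block_count h X K D σ
  -- every neighbour of a head lies in one of the blocks
  have hleft : (X.card : ℝ) * d ≤ ∑ x ∈ X, ∑ k ∈ Finset.range K,
      (((D (σ x k) k).filter fun y => R.Adj x y).card : ℝ) := by
    rw [← nsmul_eq_mul, ← Finset.sum_const]
    refine Finset.sum_le_sum fun x hx => (hd x hx).trans ?_
    have hsub : (Finset.univ.filter fun y => R.Adj x y) ⊆
        (Finset.range K).biUnion fun k => (D (σ x k) k).filter fun y => R.Adj x y := by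
      intro y hy
      have hy' := (Finset.mem_filter.mp hy).2
      obtain ⟨g, hg, hgx⟩ := mem_heads.mp (hX hx)
      have hadj : Γ.Adj (g 0) y := by rw [hgx]; exact hR hy'
      obtain ⟨j, hj, hyj⟩ := nbr_mem hmax hg.1 hadj
      obtain ⟨i, hi, hyi⟩ := hg.2.2.1 (j + 1) hj
      rw [← hyj] at hyi
      subst hyi
      refine Finset.mem_biUnion.mpr ⟨i / ℓ, ?_, ?_⟩
      · rw [Finset.mem_range, Nat.div_lt_iff_lt_mul hℓ]; omega
      · refine Finset.mem_filter.mpr ⟨hσ2 x hx _ i ?_ hy', hy'⟩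
        simp [block, hi]
    have := (Finset.card_le_card hsub).trans Finset.card_biUnion_le
    unfold dgr
    exact_mod_cast this
  have hright : ∑ x ∈ X, ∑ k ∈ Finset.range K, ((D (σ x k) k).card : ℝ) ≤
      X.card * (Y.card + K + t * ℓ) := by
    rw [← nsmul_eq_mul, ← Finset.sum_const]
    refine Finset.sum_le_sum fun x hx => ?_
    have hb : ∀ k, (D (σ x k) k).card ≤ ((posOf m p0 Y).filter fun i => i / ℓ = k).card + 1 +
        (if σ x k = 2 then ℓ else 0) := by
      intro k
      generalize σ x k = s
      fin_cases s
      · simpa [D] using card_Dplus_le hℓ Y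
      · simpa [D] using card_Dminus_le hℓ Y
      · have h1 := Finset.card_image_le (s := block m ℓ k) (f := p0)
        have h2 := card_block_le (m := m) (k := k) hℓ
        simp [D]
        omega
    have hsum : ∑ k ∈ Finset.range K, (D (σ x k) k).card ≤ Y.card + K + t * ℓ := by
      refine (Finset.sum_le_sum fun k _ => hb k).trans ?_
      rw [Finset.sum_add_distrib, Finset.sum_add_distrib]
      have h1 := sum_posOf_le (ℓ := ℓ) hp0 Y K
      have h2 : ∑ k ∈ Finset.range K, (if σ x k = 2 then ℓ else 0) ≤ t * ℓ := by
        rw [← Finset.sum_filter, Finset.sum_const, smul_eq_mul]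
        exact Nat.mul_le_mul_right _ (hσ1 x hx)
      simp only [Finset.sum_const, Finset.card_range, smul_eq_mul, mul_one] at *
      omega
    exact_mod_cast hsum
  refine hleft.trans (hcount.trans ?_)
  have := mul_le_mul_of_nonneg_left hright (by positivity : 0 ≤ (1 + ε / 20) * q)
  linarith

end Growth

/-! ### Rotations reach more than half of the vertices -/

section Det

open scoped Classical

variable {n : ℕ} {R Γ : SimpleGraph (Fin n)} {q ε A B : ℝ} {m : ℕ} {p0 : ℕ → Fin n}

lemma IsP.le_card (hp0 : IsP Γ m p0) : m ≤ n := by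
  have := Finset.card_le_card_of_injOn (s := Finset.range m) (t := Finset.univ) p0
    (fun _ _ => Finset.mem_coe.mpr (Finset.mem_univ _)) (fun i hi j hj h => hp0.1 _ _
      (Finset.mem_range.mp (Finset.mem_coe.mp hi)) (Finset.mem_range.mp (Finset.mem_coe.mp hj)) h)
  simpa using this

/-- A set `X` with at least `s n` elements contains at least `κ n` vertices of degree at least
`(s - κ + 3 ε / 4) q n`. -/
lemma exists_highDeg (h : PR R q ε A B) {s κ : ℝ} (hs : s ≤ 1 / 2) (hκ0 : 0 ≤ κ) (hκ : κ ≤ s)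
    (X : Finset (Fin n)) (hX : s * n ≤ X.card) :
    ∃ X' ⊆ X, κ * n ≤ X'.card ∧ ∀ x ∈ X', (s - κ + 3 * ε / 4) * (q * n) ≤ dgr R x := by
  refine ⟨X.filter fun x => ¬ (dgr R x : ℝ) < (s - κ + 3 * ε / 4) * (q * n),
    Finset.filter_subset _ _, ?_, fun x hx => not_lt.mp (Finset.mem_filter.mp hx).2⟩
  have h1 := h.low (s - κ) (by linarith) (by linarith)
  have h2 := Finset.card_filter_add_card_filter_not (s := X)
    (fun x => (dgr R x : ℝ) < (s - κ + 3 * ε / 4) * (q * n))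
  have h3 : (X.filter fun x => (dgr R x : ℝ) < (s - κ + 3 * ε / 4) * (q * n)).card ≤
      (Finset.univ.filter fun x => (dgr R x : ℝ) < (s - κ + 3 * ε / 4) * (q * n)).card :=
    Finset.card_le_card (Finset.filter_subset_filter _ (Finset.subset_univ _))
  have h2' : ((X.filter fun x => (dgr R x : ℝ) < (s - κ + 3 * ε / 4) * (q * n)).card : ℝ) +
      (X.filter fun x => ¬ (dgr R x : ℝ) < (s - κ + 3 * ε / 4) * (q * n)).card = X.card := by
    exact_mod_cast h2
  have h3' : ((X.filter fun x => (dgr R x : ℝ) < (s - κ + 3 * ε / 4) * (q * n)).card : ℝ) ≤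
      (Finset.univ.filter fun x => (dgr R x : ℝ) < (s - κ + 3 * ε / 4) * (q * n)).card := by
    exact_mod_cast h3
  nlinarith

/-- If the heads after `t` rounds number at least `s n` with `s ≤ 1 / 2`, then the next round
produces at least `(s + ε / 4) n` of them. -/
lemma heads_grow (h : PR R q ε A B) (hR : R ≤ Γ) (hp0 : IsP Γ m p0) (hmax : NoLonger Γ m)
    {t ℓ K : ℕ} {κ s : ℝ} (hε : 0 < ε) (hε1 : ε ≤ 1 / 10) (hq : 0 < q) (hn : 0 < n) (hℓ : 0 < ℓ)
    (hK : n ≤ K * ℓ) (hκ0 : 0 < κ) (hκ : κ ≤ ε / 20) (hK1 : (K : ℝ) ≤ ε / 20 * n)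
    (htℓ : (t * ℓ : ℝ) ≤ ε / 20 * n) (hKA : 3 * K * A ≤ ε / 10 * κ * (q * n))
    (hs : s ≤ 1 / 2) (hκs : κ ≤ s) (hX : s * n ≤ (heads Γ m p0 t).card) :
    (s + ε / 4) * n ≤ (heads Γ m p0 (t + 1)).card := by
  obtain ⟨X, hXsub, hXc, hXd⟩ := exists_highDeg h hs hκ0.le hκs _ hX
  have hraw := heads_grow_raw h hR hp0 hmax hε hq.le hℓ (hp0.le_card.trans hK) X hXsub hXd
  set y : ℝ := ((heads Γ m p0 (t + 1)).card : ℝ)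
  have hn' : (0 : ℝ) < n := by exact_mod_cast hn
  have hXpos : (0 : ℝ) < X.card := lt_of_lt_of_le (by positivity) hXc
  have h1 : 3 * K * (A * n) ≤ ε / 10 * (X.card * (q * n)) := by
    have h2 := mul_le_mul_of_nonneg_right hKA hn'.le
    have h3 := mul_le_mul_of_nonneg_left hXc (by positivity : 0 ≤ ε / 10 * (q * n))
    nlinarith
  have h4 : (1 + ε / 20) * q * (X.card * (y + K + t * ℓ)) ≤
      (1 + ε / 20) * q * (X.card * (y + ε / 10 * n)) := by
    have : y + K + t * ℓ ≤ y + ε / 10 * n := by linarith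
    gcongr
  have h5 : (q * X.card) * ((s - κ + 3 * ε / 4) * n) ≤
      (q * X.card) * ((1 + ε / 20) * (y + ε / 10 * n) + ε / 10 * n) := by nlinarith
  have h6 := le_of_mul_le_mul_left h5 (by positivity)
  by_contra hcon
  push Not at hcon
  have h7 : (1 + ε / 20) * (y + ε / 10 * n) ≤ (1 + ε / 20) * ((s + ε / 4) * n + ε / 10 * n) := by
    gcongr
  have h8 : (s - κ + 3 * ε / 4) ≤ (1 + ε / 20) * ((s + ε / 4) + ε / 10) + ε / 10 := by
    refine le_of_mul_le_mul_right ?_ hn'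
    nlinarith
  nlinarith

set_option maxHeartbeats 1000000 in
/-- The deterministic part of the argument: rotations in a supergraph `Γ` of a pseudorandom
graph `R` produce more than `n / 2` heads, and `R` has an edge leaving every set of at most
`n / 2` vertices. -/
theorem det (ε A B : ℝ) (hε : 0 < ε) (hε1 : ε ≤ 1 / 10) (hA : 0 ≤ A) (hB : 0 ≤ B) :
    ∃ L : ℝ, 0 < L ∧ ∀ᶠ n : ℕ in atTop, ∀ (q : ℝ) (R : SimpleGraph (Fin n)),
      L * Real.log n ≤ q * n → PR R q ε A B →
      (∀ (Γ : SimpleGraph (Fin n)) (m : ℕ) (p0 : ℕ → Fin n), R ≤ Γ → IsP Γ m p0 →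
        NoLonger Γ m → ∃ t, (1 / 2 + ε / 4) * n ≤ (heads Γ m p0 t).card) ∧
      (∀ Z : Finset (Fin n), Z.Nonempty → 2 * Z.card ≤ n → ∃ x ∈ Z, ∃ y ∉ Z, R.Adj x y) := by
  obtain ⟨c, hc0, hc⟩ : ∃ c : ℝ, 0 < c ∧ 4 * B * c ≤ ε / 8 := by
    refine ⟨ε / (32 * (B + 1)), by positivity, ?_⟩
    have : 4 * B * (ε / (32 * (B + 1))) = ε / 8 * (B / (B + 1)) := by field_simp; ring
    rw [this]
    have : B / (B + 1) ≤ 1 := by rw [div_le_one (by positivity)]; linarith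
    nlinarith
  obtain ⟨κ, hκ0, hκ1, hκc⟩ : ∃ κ : ℝ, 0 < κ ∧ κ ≤ ε / 20 ∧ κ ≤ c :=
    ⟨min (ε / 20) c, by positivity, min_le_left _ _, min_le_right _ _⟩
  obtain ⟨J, hJ⟩ := exists_nat_ge (2 / ε)
  have hJ' : 1 / 2 ≤ J * (ε / 4) := by
    rw [div_le_iff₀ hε] at hJ; linarith
  have hL0 : 0 < max (96 / ε) (3690 * A / (ε ^ 2 * κ)) := lt_max_of_lt_left (by positivity)
  refine ⟨max (96 / ε) (3690 * A / (ε ^ 2 * κ)), hL0, ?_⟩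
  set L := max (96 / ε) (3690 * A / (ε ^ 2 * κ)) with hL
  have ev1 : ∀ᶠ n : ℕ in atTop, (J : ℝ) + 2 ≤ Real.log n :=
    (Real.tendsto_log_atTop.comp tendsto_natCast_atTop_atTop).eventually_ge_atTop _
  have ev2 : ∀ᶠ n : ℕ in atTop, Real.log n ≤ ε ^ 2 / 2460 * n := by
    have h1 := (Real.isLittleO_log_id_atTop.bound (by positivity : 0 < ε ^ 2 / 2460))
    filter_upwards [tendsto_natCast_atTop_atTop.eventually h1] with n hn
    simpa using (le_abs_self _).trans hn
  filter_upwards [ev1, ev2, eventually_ge_atTop 1] with n hn1 hn2 hn3 q R hqL hPR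
  set lg := Real.log n with hlg
  have hJ0 : (0 : ℝ) ≤ J := Nat.cast_nonneg J
  have hlg2 : 2 ≤ lg := by linarith
  have hn' : (0 : ℝ) < n := by exact_mod_cast hn3
  have hqn : 0 < q * n := lt_of_lt_of_le (by positivity) hqL
  have hq : 0 < q := by
    by_contra hq
    have : q * n ≤ 0 := mul_nonpos_of_nonpos_of_nonneg (by linarith) hn'.le
    linarith
  have hLa : 96 * lg ≤ ε * (q * n) := by
    have h1 : 96 / ε * lg ≤ q * n := le_trans (by gcongr; exact le_max_left _ _) hqL
    rw [div_mul_eq_mul_div, div_le_iff₀ hε] at h1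
    linarith
  have hLb : 3690 * A * lg ≤ ε ^ 2 * κ * (q * n) := by
    have h1 : 3690 * A / (ε ^ 2 * κ) * lg ≤ q * n :=
      le_trans (by gcongr; exact le_max_right _ _) hqL
    rw [div_mul_eq_mul_div, div_le_iff₀ (by positivity)] at h1
    linarith
  constructor
  · intro Γ m p0 hR hp0 hmax
    have hone : ∀ t, 1 ≤ (heads Γ m p0 t).card := fun t =>
      Finset.card_pos.mpr ⟨p0 0, mem_heads.mpr ⟨p0, Good.self hp0 t, rfl⟩⟩
    set T := Nat.log 2 n + 1 with hT
    have hTlog : (T : ℝ) ≤ 2 * lg + 1 := by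
      have h1 : ((2 : ℝ)) ^ (Nat.log 2 n) ≤ n := by exact_mod_cast Nat.pow_log_le_self 2 (by omega)
      have h2 := Real.log_le_log (by positivity) h1
      rw [Real.log_pow] at h2
      have h3 := Real.log_two_gt_d9
      have h4 : (0 : ℝ) ≤ Nat.log 2 n := Nat.cast_nonneg _
      rw [hT]; push_cast
      nlinarith
    have hTJ : ((T + J : ℕ) : ℝ) ≤ 3 * lg := by push_cast; linarith
    -- doubling phase
    have hphase1 : ∀ t, t ≤ T → κ * n ≤ (heads Γ m p0 t).card ∨ 2 ^ t ≤ (heads Γ m p0 t).card := by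
      intro t
      induction t with
      | zero => intro _; right; simpa using hone 0
      | succ t ih =>
        intro ht
        by_cases hbig : κ * n ≤ (heads Γ m p0 t).card
        · left
          refine hbig.trans ?_
          exact_mod_cast Finset.card_le_card (heads_mono (Nat.le_succ t))
        · right
          have h2 := (ih (by omega)).resolve_left hbig
          push Not at hbig
          have htT : (t : ℝ) + 1 ≤ T := by exact_mod_cast ht
          have h3 := heads_double hPR hR hp0 hmax (t := t) hε hB hqn (by linarith) (by linarith)
            hc (hone t) (hbig.le.trans (by gcongr))
          rw [pow_succ]; omega
    have hstart : κ * n ≤ (heads Γ m p0 T).card := by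
      rcases hphase1 T le_rfl with h | h
      · exact h
      · exfalso
        have h1 := Finset.card_le_univ (heads Γ m p0 T)
        rw [Fintype.card_fin] at h1
        have h2 := Nat.lt_pow_succ_log_self (b := 2) (by norm_num) n
        simp only [hT] at h h1
        omega
    -- block length and number of blocks
    obtain ⟨ℓ, K, hℓ, hK, hℓ1, hKb⟩ : ∃ ℓ K : ℕ, 0 < ℓ ∧ n ≤ K * ℓ ∧ 3 * lg * ℓ ≤ ε / 20 * n ∧
        (K : ℝ) ≤ 123 * lg / ε := by
      have hz1 : 1 ≤ ε / 20 * n / (3 * lg) := by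
        rw [le_div_iff₀ (by positivity)]
        nlinarith
      set z := ε / 20 * n / (3 * lg) with hz
      have hℓ : 0 < ⌊z⌋₊ := Nat.floor_pos.mpr hz1
      refine ⟨⌊z⌋₊, n / ⌊z⌋₊ + 1, hℓ, ?_, ?_, ?_⟩
      · have := Nat.lt_div_mul_add (a := n) hℓ
        rw [add_mul]; omega
      · have h1 := Nat.floor_le (by linarith : 0 ≤ z)
        calc 3 * lg * (⌊z⌋₊ : ℝ) ≤ 3 * lg * z := by gcongr
          _ = ε / 20 * n := by rw [hz]; field_simp
      · have h1 := Nat.lt_floor_add_one z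
        have h2 : (1 : ℝ) ≤ ⌊z⌋₊ := by exact_mod_cast hℓ
        have h3 : z / 2 ≤ ⌊z⌋₊ := by linarith
        have h4 : ((n / ⌊z⌋₊ : ℕ) : ℝ) ≤ n / ⌊z⌋₊ := Nat.cast_div_le
        have h5 : (n : ℝ) / ⌊z⌋₊ ≤ n / (z / 2) := by gcongr
        have h6 : (n : ℝ) / (z / 2) = 120 * lg / ε := by rw [hz]; field_simp; norm_num
        have h7 : 1 ≤ 3 * lg / ε := by rw [le_div_iff₀ hε]; linarith
        have h8 : 123 * lg / ε = 120 * lg / ε + 3 * lg / ε := by ring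
        push_cast
        linarith
    have hK1 : (K : ℝ) ≤ ε / 20 * n := by
      refine hKb.trans ?_
      rw [div_le_iff₀ hε]; nlinarith
    have hKA : 3 * K * A ≤ ε / 10 * κ * (q * n) := by
      rw [le_div_iff₀ hε] at hKb
      have h1 := mul_le_mul_of_nonneg_right hKb hA
      have h2 : ε * (3 * K * A) ≤ ε * (ε / 10 * κ * (q * n)) := by nlinarith
      exact le_of_mul_le_mul_left h2 hε
    have hphase2 : ∀ j ≤ J, ∀ s : ℝ, s ≤ 1 / 2 → s ≤ κ + j * (ε / 4) →
        s * n ≤ (heads Γ m p0 (T + j)).card := by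
      intro j
      induction j with
      | zero =>
        intro _ s _ hs
        refine le_trans ?_ hstart
        gcongr; simpa using hs
      | succ j ih =>
        intro hj s hs1 hs2
        push_cast at hs2
        have hjT : ((T + j : ℕ) : ℝ) ≤ 3 * lg := le_trans (by exact_mod_cast (by omega)) hTJ
        have htl : (((T + j : ℕ) : ℝ) * ℓ) ≤ ε / 20 * n := le_trans (by gcongr) hℓ1
        by_cases hsmall : s - ε / 4 ≤ κ
        · have h2 : κ * n ≤ (heads Γ m p0 (T + j)).card :=
            ih (by omega) κ (by linarith) (by
              have : (0 : ℝ) ≤ j := Nat.cast_nonneg j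
              nlinarith)
          have := heads_grow hPR hR hp0 hmax hε hε1 hq (by omega) hℓ hK hκ0 hκ1 hK1 htl hKA
            (by linarith) le_rfl h2
          rw [← add_assoc]
          refine le_trans ?_ this
          gcongr; linarith
        · have h2 := ih (by omega) (s - ε / 4) (by linarith) (by linarith)
          have := heads_grow hPR hR hp0 hmax hε hε1 hq (by omega) hℓ hK hκ0 hκ1 hK1 htl hKA
            (by linarith) (by linarith) h2
          rw [← add_assoc]
          refine le_trans (le_of_eq ?_) this
          ring
    have h2 := hphase2 J le_rfl (1 / 2) le_rfl (by linarith)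
    have htl : (((T + J : ℕ) : ℝ) * ℓ) ≤ ε / 20 * n := le_trans (by gcongr) hℓ1
    exact ⟨_, heads_grow hPR hR hp0 hmax hε hε1 hq (by omega) hℓ hK hκ0 hκ1 hK1 htl hKA le_rfl
      (by linarith) h2⟩
  · intro Z hZ hZn
    by_contra hcon
    push Not at hcon
    have hdeg : ∀ X ⊆ Z, (cnt R (X ×ˢ Z) : ℝ) = ∑ x ∈ X, (dgr R x : ℝ) := by
      intro X hX
      rw [cnt_prod]
      push_cast
      refine Finset.sum_congr rfl fun x hx => ?_
      unfold dgr
      congr 2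
      ext y
      simp only [Finset.mem_filter, Finset.mem_univ, true_and, and_iff_right_iff_imp]
      intro hxy
      by_contra hy
      exact hcon x (hX hx) y hy hxy
    have hZ1 : (1 : ℝ) ≤ Z.card := by exact_mod_cast hZ.card_pos
    have hZn' : 2 * (Z.card : ℝ) ≤ n := by exact_mod_cast hZn
    by_cases hsmall : (Z.card : ℝ) ≤ c * n
    · have h1 : (Z.card : ℝ) * (3 * ε / 4 * (q * n)) ≤ cnt R (Z ×ˢ Z) := by
        rw [hdeg Z subset_rfl, ← nsmul_eq_mul, ← Finset.sum_const]
        exact Finset.sum_le_sum fun x _ => hPR.minDeg x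
      have h2 := hPR.e3 Z Z
      have h3 : B * q * (Z.card * Z.card) ≤ Z.card * (ε / 8 * (q * n)) := by
        have h4 : B * q * (Z.card * Z.card) ≤ B * q * (Z.card * (c * n)) := by gcongr
        have h5 := mul_le_mul_of_nonneg_right hc (by positivity : 0 ≤ (Z.card : ℝ) * (q * n))
        have h6 : 0 ≤ B * c * (Z.card * (q * n)) := by positivity
        nlinarith
      have h7 : 2 * ((Z.card : ℝ) + Z.card + 1) * lg ≤ Z.card * (ε / 8 * (q * n)) := by
        have : 2 * ((Z.card : ℝ) + Z.card + 1) * lg ≤ 2 * (3 * Z.card) * lg := by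
          gcongr; linarith
        nlinarith
      have h8 : 0 < (Z.card : ℝ) * (ε / 2 * (q * n)) := by positivity
      nlinarith
    · push Not at hsmall
      have hs : (Z.card : ℝ) / n ≤ 1 / 2 := by rw [div_le_iff₀ hn']; linarith
      have hsκ : κ ≤ (Z.card : ℝ) / n := by
        rw [le_div_iff₀ hn']; exact le_trans (by gcongr) hsmall.le
      have hzn : (Z.card : ℝ) / n * n = Z.card := by field_simp
      obtain ⟨X, hXZ, hXc, hXd⟩ := exists_highDeg hPR hs hκ0.le hsκ Z hzn.le
      set s := (Z.card : ℝ) / n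
      have h1 : (X.card : ℝ) * ((s - κ + 3 * ε / 4) * (q * n)) ≤ cnt R (X ×ˢ Z) := by
        rw [hdeg X hXZ, ← nsmul_eq_mul, ← Finset.sum_const]
        exact Finset.sum_le_sum fun x hx => hXd x hx
      have h2 := hPR.e2 X Z
      have hXpos : (0 : ℝ) < X.card := lt_of_lt_of_le (by positivity) hXc
      have hA' : A * n ≤ ε / 10 * (X.card * (q * n)) := by
        have h3 : A ≤ ε / 10 * (κ * (q * n)) := by
          have h5 : 3690 * A * 2 ≤ 3690 * A * lg := by gcongr
          have h6 : 0 < κ * (q * n) := by positivity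
          nlinarith
        have h4 := mul_le_mul_of_nonneg_right h3 hn'.le
        have h5 := mul_le_mul_of_nonneg_left hXc (by positivity : 0 ≤ ε / 10 * (q * n))
        nlinarith
      rw [← hzn] at h2
      have h6 : (X.card * (q * n)) * (s - κ + 3 * ε / 4) ≤
          (X.card * (q * n)) * ((1 + ε / 20) * s + ε / 10) := by nlinarith
      have h7 := le_of_mul_le_mul_left h6 (by positivity)
      nlinarith

end Det

/-! ### Closing a longest path to a Hamilton cycle -/

section Closing
open scoped Classical
variable {n : ℕ}

theorem IsP.reverse {V : Type*} {Γ : SimpleGraph V} {m : ℕ} {g : ℕ → V} (hg : IsP Γ m g) :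
    IsP Γ m (fun i => g (m - 1 - i)) := by
  refine ⟨?_, ?_⟩
  · intro i j hi hj h
    have := hg.1 (m - 1 - i) (m - 1 - j) (by omega) (by omega) h
    omega
  · intro i hi
    have h := hg.2 (m - 1 - (i + 1)) (by omega)
    rw [show m - 1 - (i + 1) + 1 = m - 1 - i by omega] at h
    exact h.symm

theorem IsP.mono {V : Type*} {Γ Γ' : SimpleGraph V} {m : ℕ} {g : ℕ → V} (h : Γ ≤ Γ')
    (hg : IsP Γ m g) : IsP Γ' m g := ⟨hg.1, fun i hi => h (hg.2 i hi)⟩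

/-- The last vertices of the longest paths of `Γ` that start at `v`. -/
noncomputable def ends (Γ : SimpleGraph (Fin n)) (v : Fin n) : Finset (Fin n) :=
  Finset.univ.filter fun w =>
    ∃ m g, IsP Γ m g ∧ NoLonger Γ m ∧ g 0 = v ∧ g (m - 1) = w

theorem exists_longest (Γ : SimpleGraph (Fin n)) (hn : 0 < n) :
    ∃ m g, IsP Γ m g ∧ NoLonger Γ m := by
  let P : ℕ → Prop := fun m => ∃ g, IsP Γ m g
  have h0 : P 0 := ⟨fun _ => ⟨0, hn⟩, fun i hi => by omega, fun i hi => by omega⟩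
  obtain ⟨g, hg⟩ : P (Nat.findGreatest P n) := Nat.findGreatest_spec (Nat.zero_le n) h0
  exact ⟨_, g, hg, fun m' g' hg' => Nat.le_findGreatest hg'.le_card ⟨g', hg'⟩⟩

/-- A path whose ends are adjacent can be rotated cyclically. -/
theorem IsP.cycle {V : Type*} {Γ : SimpleGraph V} {m : ℕ} {g : ℕ → V} (hg : IsP Γ m g)
    (hc : Γ.Adj (g 0) (g (m - 1))) (i : ℕ) : IsP Γ m (fun k => g ((i + k) % m)) := by
  refine ⟨?_, ?_⟩
  · intro a b ha hb h
    have h1 := hg.1 _ _ (Nat.mod_lt _ (by omega)) (Nat.mod_lt _ (by omega)) h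
    have h2 : a ≡ b [MOD m] := Nat.ModEq.add_left_cancel' i h1
    rwa [Nat.ModEq, Nat.mod_eq_of_lt ha, Nat.mod_eq_of_lt hb] at h2
  · intro k hk
    have hlt : (i + k) % m < m := Nat.mod_lt _ (by omega)
    have e : (i + (k + 1)) % m = ((i + k) % m + 1) % m := by
      rw [← add_assoc, Nat.mod_add_mod]
    simp only
    rw [e]
    by_cases h : (i + k) % m + 1 < m
    · rw [Nat.mod_eq_of_lt h]; exact hg.2 _ h
    · have : (i + k) % m = m - 1 := by omega
      rw [this, show m - 1 + 1 = m by omega, Nat.mod_self]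
      exact hc.symm

theorem hamiltonian_of_closed {Γ : SimpleGraph (Fin n)} (hn : 3 ≤ n) {g : ℕ → Fin n}
    (hg : IsP Γ n g) (hc : Γ.Adj (g 0) (g (n - 1))) :
    ∃ (v : Fin n) (w : Γ.Walk v v), w.IsCycle ∧ w.length = n := by
  rw [← SimpleGraph.cycleGraph_isContained_iff (by omega)]
  have key : ∀ u v : Fin n, (u - v).val = 1 → Γ.Adj (g u.val) (g v.val) := by
    intro u v h
    rw [Fin.sub_def] at h
    simp only at h
    have hu := u.2
    have hv := v.2
    by_cases hle : v.val ≤ u.val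
    · have : n - v.val + u.val = (u.val - v.val) + n := by omega
      rw [this, Nat.add_mod_right, Nat.mod_eq_of_lt (by omega)] at h
      have h2 := hg.2 v.val (by omega)
      rw [show v.val + 1 = u.val by omega] at h2
      exact h2.symm
    · rw [Nat.mod_eq_of_lt (by omega)] at h
      rw [show u.val = 0 by omega, show v.val = n - 1 by omega]
      exact hc
  refine ⟨⟨⟨fun u => g u.val, ?_⟩, ?_⟩⟩
  · intro u v h
    obtain ⟨k, rfl⟩ : ∃ k, n = k + 3 := ⟨n - 3, by omega⟩
    rw [SimpleGraph.cycleGraph_adj'] at h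
    rcases h with h | h
    · exact key u v h
    · exact (key v u h).symm
  · intro u v h
    exact Fin.ext (hg.1 _ _ u.2 v.2 h)

/-- The graph formed by the edges of the vertex sequence `g` of length `m`. -/
def seqGraph (m : ℕ) (g : ℕ → Fin n) : SimpleGraph (Fin n) :=
  SimpleGraph.fromEdgeSet ((fun i => s(g i, g (i + 1))) '' {i | i + 1 < m})

theorem seqGraph_le {Γ : SimpleGraph (Fin n)} {m : ℕ} {g : ℕ → Fin n} (hg : IsP Γ m g) :
    seqGraph m g ≤ Γ := by
  intro a b h
  rw [seqGraph, SimpleGraph.fromEdgeSet_adj] at h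
  obtain ⟨⟨i, hi, he⟩, -⟩ := h
  have := hg.2 i hi
  rw [← SimpleGraph.mem_edgeSet] at this ⊢
  rwa [← he]

theorem isP_seqGraph {Γ : SimpleGraph (Fin n)} {m : ℕ} {g : ℕ → Fin n} (hg : IsP Γ m g) :
    IsP (seqGraph m g) m g := by
  refine ⟨hg.1, fun i hi => ?_⟩
  rw [seqGraph, SimpleGraph.fromEdgeSet_adj]
  exact ⟨⟨i, hi, rfl⟩, (hg.2 i hi).ne⟩

theorem card_edges_sup_path (R : SimpleGraph (Fin n)) {m : ℕ} (hm : m ≤ n) (g : ℕ → Fin n) :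
    (R ⊔ seqGraph m g).edgeFinset.card ≤ R.edgeFinset.card + n := by
  have hsub : (R ⊔ seqGraph m g).edgeFinset ⊆
      R.edgeFinset ∪ (Finset.range n).image (fun i => s(g i, g (i + 1))) := by
    intro e he
    rw [SimpleGraph.mem_edgeFinset, SimpleGraph.edgeSet_sup] at he
    rw [Finset.mem_union, SimpleGraph.mem_edgeFinset]
    rcases he with he | he
    · exact Or.inl he
    · right
      rw [seqGraph, SimpleGraph.edgeSet_fromEdgeSet] at he
      obtain ⟨⟨i, hi, rfl⟩, -⟩ := he
      exact Finset.mem_image.2 ⟨i, Finset.mem_range.2 (by have : i + 1 < m := hi; omega), rfl⟩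
  refine (Finset.card_le_card hsub).trans ((Finset.card_union_le _ _).trans ?_)
  have := Finset.card_image_le (s := Finset.range n) (f := fun i => s(g i, g (i + 1)))
  rw [Finset.card_range] at this
  omega

/-- Closing argument: `h₁` provides rotations, `h₂` connectivity, and `h₃` an edge joining
the two ends of some longest path. -/
theorem hamiltonian_of_rotations (hn : 3 ≤ n) {ε : ℝ} (hε : 0 < ε)
    {G' R : SimpleGraph (Fin n)} (hR : R ≤ G')
    (h₁ : ∀ (Γ : SimpleGraph (Fin n)) (m : ℕ) (p0 : ℕ → Fin n), R ≤ Γ → IsP Γ m p0 →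
      NoLonger Γ m → ∃ t, (1 / 2 + ε / 4) * n ≤ (heads Γ m p0 t).card)
    (h₂ : ∀ Z : Finset (Fin n), Z.Nonempty → 2 * Z.card ≤ n → ∃ x ∈ Z, ∃ y ∉ Z, R.Adj x y)
    (h₃ : ∀ Γ : SimpleGraph (Fin n), Γ ≤ G' → Γ.edgeFinset.card ≤ R.edgeFinset.card + n →
      ∀ S : Finset (Fin n), (1 / 2 + ε / 4) * n ≤ S.card →
        (∀ v ∈ S, (n : ℝ) / 2 ≤ (ends Γ v).card) → ∃ v ∈ S, ∃ w ∈ ends Γ v, G'.Adj v w) :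
    ∃ (v : Fin n) (w : G'.Walk v v), w.IsCycle ∧ w.length = n := by
  have hn0 : (0 : ℝ) < n := by exact_mod_cast (by omega : 0 < n)
  obtain ⟨m, P, hP, hmax⟩ := exists_longest G' (by omega : 0 < n)
  set Γ := R ⊔ seqGraph m P with hΓ
  have hΓG : Γ ≤ G' := sup_le hR (seqGraph_le hP)
  have hRΓ : R ≤ Γ := le_sup_left
  have hPΓ : IsP Γ m P := (isP_seqGraph hP).mono le_sup_right
  have hmaxΓ : NoLonger Γ m := fun m' g' hg' => hmax m' g' (hg'.mono hΓG)
  obtain ⟨t, ht⟩ := h₁ Γ m P hRΓ hPΓ hmaxΓ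
  obtain ⟨v, hv, w, hw, hvw⟩ := h₃ Γ hΓG (by
    convert card_edges_sup_path R hP.le_card P) _ ht (by
    intro v hv
    obtain ⟨g, hg, rfl⟩ := mem_heads.1 hv
    obtain ⟨t', ht'⟩ := h₁ Γ m _ hRΓ hg.1.reverse hmaxΓ
    refine le_trans ?_ (ht'.trans (Nat.cast_le.2 (Finset.card_le_card ?_)))
    · nlinarith
    · intro y hy
      obtain ⟨g', hg', rfl⟩ := mem_heads.1 hy
      refine Finset.mem_filter.2 ⟨Finset.mem_univ _, m, _, hg'.1.reverse, hmaxΓ, ?_, ?_⟩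
      · simp only [Nat.sub_zero]
        rw [hg'.2.1]
        simp
      · simp)
  obtain ⟨-, m₁, g, hg, hm₁, rfl, rfl⟩ := Finset.mem_filter.1 hw
  obtain rfl : m₁ = m := le_antisymm (hmaxΓ _ _ hg) (hm₁ _ _ hPΓ)
  have hgG := hg.mono hΓG
  have hmn : m₁ ≤ n := hg.le_card
  -- all heads lie on the path, so it covers more than half of the vertices
  have hhalf : n < 2 * m₁ := by
    have hsub : heads Γ m₁ P t ⊆ (Finset.range m₁).image P := by
      intro x hx
      obtain ⟨g', hg', rfl⟩ := mem_heads.1 hx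
      have hpos : 0 < m₁ := by
        by_contra h0
        have h00 : m₁ = 0 := by omega
        have := hmaxΓ 1 (fun _ => ⟨0, by omega⟩) ⟨fun i j hi hj _ => by omega,
          fun i hi => by omega⟩
        omega
      obtain ⟨j, hj, e⟩ := hg'.2.2.1 0 hpos
      exact Finset.mem_image.2 ⟨j, Finset.mem_range.2 hj, e.symm⟩
    have h1 := (Finset.card_le_card hsub).trans Finset.card_image_le
    rw [Finset.card_range] at h1
    have h2 : ((heads Γ m₁ P t).card : ℝ) ≤ m₁ := by exact_mod_cast h1
    have h3 : (n : ℝ) < 2 * m₁ := by nlinarith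
    exact_mod_cast h3
  have hmeq : m₁ = n := by
    by_contra hne
    set I := (Finset.range m₁).image g with hI
    have hIc : I.card = m₁ := by
      rw [hI, Finset.card_image_of_injOn, Finset.card_range]
      intro a ha b hb h
      exact hg.1 a b (by simpa using ha) (by simpa using hb) h
    have hZc : (Iᶜ).card = n - m₁ := by
      rw [Finset.card_compl, Fintype.card_fin, hIc]
    obtain ⟨x, hx, y, hy, hxy⟩ := h₂ Iᶜ (Finset.card_pos.1 (by omega)) (by omega)
    rw [Finset.mem_compl, not_not] at hy
    rw [Finset.mem_compl] at hx
    obtain ⟨i, hi, rfl⟩ := Finset.mem_image.1 hy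
    rw [Finset.mem_range] at hi
    have hcyc := hgG.cycle hvw i
    have hbig := hcyc.cons (y := x) (by
      simp only [add_zero]
      rw [Nat.mod_eq_of_lt hi]
      exact (hR hxy).symm) (by
      intro k hk he
      apply hx
      rw [← he]
      exact Finset.mem_image.2 ⟨_, Finset.mem_range.2 (Nat.mod_lt _ (by omega)), rfl⟩)
    have := hmax _ _ hbig
    omega
  subst hmeq
  exact hamiltonian_of_closed hn hgG hvw

end Closing

/-! ### Resilience of typical graphs -/

section Core
open scoped Classical
variable {n : ℕ}

theorem deg_eq_dgr (H : SimpleGraph (Fin n)) (x : Fin n) : deg H x = dgr H x := by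
  rw [deg, dgr, ← Set.ncard_coe_finset]
  congr 1
  ext y
  simp

theorem dgr_eq_cnt (H : SimpleGraph (Fin n)) (x : Fin n) :
    dgr H x = cnt H ({x} ×ˢ Finset.univ) := by
  rw [cnt_prod, Finset.sum_singleton, dgr]

theorem dgr_top (x : Fin n) : dgr (⊤ : SimpleGraph (Fin n)) x + 1 = n := by
  have h : (Finset.univ.filter fun y => (⊤ : SimpleGraph (Fin n)).Adj x y) =
      Finset.univ.erase x := by
    ext y
    simp [eq_comm]
  have h' : dgr (⊤ : SimpleGraph (Fin n)) x = (Finset.univ.erase x).card := by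
    rw [← h, dgr]
    congr
  rw [h', Finset.card_erase_add_one (Finset.mem_univ _), Finset.card_univ, Fintype.card_fin]

theorem dgr_le_sdiff_add (G H : SimpleGraph (Fin n)) (x : Fin n) :
    dgr G x ≤ dgr (G \ H) x + dgr H x := by
  rw [dgr, dgr, dgr]
  refine (Finset.card_le_card ?_).trans (Finset.card_union_le _ _)
  intro y hy
  simp only [Finset.mem_union, Finset.mem_filter, Finset.mem_univ, true_and,
    SimpleGraph.sdiff_adj] at hy ⊢
  tauto

theorem cnt_mono {G G' : SimpleGraph (Fin n)} (h : G ≤ G') (D : Finset (Fin n × Fin n)) :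
    cnt G D ≤ cnt G' D :=
  Finset.card_le_card fun z hz => by
    rw [Finset.mem_filter] at hz ⊢
    exact ⟨hz.1, h hz.2⟩

theorem cnt_le_mul (G : SimpleGraph (Fin n)) (X Y : Finset (Fin n)) :
    (cnt G (X ×ˢ Y) : ℝ) ≤ X.card * Y.card := by
  have : cnt G (X ×ˢ Y) ≤ (X ×ˢ Y).card := Finset.card_filter_le _ _
  rw [Finset.card_product] at this
  exact_mod_cast this

theorem two_mul_card_edges (R : SimpleGraph (Fin n)) :
    2 * R.edgeFinset.card = cnt R (Finset.univ ×ˢ Finset.univ) := by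
  rw [cnt_prod, ← SimpleGraph.sum_degrees_eq_twice_card_edges]
  refine Finset.sum_congr rfl fun x _ => ?_
  rw [← SimpleGraph.card_neighborFinset_eq_degree]
  congr 1
  ext y
  simp

/-- The Pósa condition bounds, for every `θ ≤ 1 / 2`, the number of vertices losing too many
edges. The summand `2 * p` absorbs rounding. -/
theorem posa_highDeg (hn : 3 ≤ n) {p ε θ : ℝ} (hp : 0 ≤ p) (hθ0 : 0 ≤ θ) (hθ : θ ≤ 1 / 2)
    {H : SimpleGraph (Fin n)} (hH : PosaFamily n p ε H) :
    ((Finset.univ.filter fun x => (1 - θ - ε) * (n * p) + 2 * p < dgr H x).card : ℝ) ≤ θ * n := by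
  obtain ⟨v, hv, hanti, hdeg⟩ := hH
  by_contra! hcon
  set bad := Finset.univ.filter fun x => (1 - θ - ε) * (n * p) + 2 * p < dgr H x
  set J := Finset.univ.filter fun i => v i ∈ bad
  have hJ : bad.card ≤ J.card := by
    have hsub : bad ⊆ J.image v := by
      intro x hx
      obtain ⟨i, rfl⟩ := hv.2 x
      exact Finset.mem_image.2 ⟨i, Finset.mem_filter.2 ⟨Finset.mem_univ _, hx⟩, rfl⟩
    exact (Finset.card_le_card hsub).trans Finset.card_image_le
  have hθn : 0 ≤ θ * n := by positivity
  set k := ⌊θ * n⌋₊ with hk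
  have hk1 : (k : ℝ) ≤ θ * n := Nat.floor_le hθn
  have hk2 : θ * n < k + 1 := Nat.lt_floor_add_one _
  have hkJ : k < J.card := by
    have : (k : ℝ) < J.card := by
      have : (bad.card : ℝ) ≤ J.card := by exact_mod_cast hJ
      linarith
    exact_mod_cast this
  obtain ⟨j, hj, hkj⟩ : ∃ j ∈ J, k ≤ j.val := by
    by_contra! hall
    have : J.card ≤ (Finset.range k).card :=
      Finset.card_le_card_of_injOn (fun i => i.val)
        (fun i hi => Finset.mem_coe.2 (Finset.mem_range.2 (hall i hi)))
        (fun a _ b _ h => Fin.ext h)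
    rw [Finset.card_range] at this
    omega
  have hj2 := j.2
  have hnR : (3 : ℝ) ≤ n := by exact_mod_cast hn
  have hkn : 2 * k ≤ n := by
    have : 2 * (k : ℝ) ≤ n := by nlinarith
    exact_mod_cast this
  let i : Fin n := ⟨k - 2, by omega⟩
  have h1 : deg H (v j) ≤ deg H (v i) := hanti i j (by
    rw [Fin.le_def]
    show k - 2 ≤ j.val
    omega)
  have hlt : ((k - 2 : ℕ) : ℝ) + 1 < n / 2 := by
    have : 2 * (((k - 2 : ℕ) : ℝ) + 1) < n := by
      exact_mod_cast (by omega : 2 * ((k - 2) + 1) < n)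
    linarith
  have h2 := hdeg i hlt
  have hge : (k : ℝ) ≤ ((k - 2 : ℕ) : ℝ) + 2 := by
    exact_mod_cast (by omega : k ≤ (k - 2) + 2)
  have hbadj := (Finset.mem_filter.1 (Finset.mem_filter.1 hj).2).2
  rw [← deg_eq_dgr] at hbadj
  have h1' : (deg H (v j) : ℝ) ≤ deg H (v i) := by exact_mod_cast h1
  have h3 : ((n : ℝ) - (((k - 2 : ℕ) : ℝ) + 1)) * p ≤ (n - θ * n + 2) * p := by
    apply mul_le_mul_of_nonneg_right _ hp
    linarith
  change (deg H (v i) : ℝ) ≤ ((n : ℝ) - (((k - 2 : ℕ) : ℝ) + 1)) * p - ε * n * p at h2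
  nlinarith

/-- A random sample of `F` at rate `δ` avoids the bad events of `PF_upper` and `PF_deg` with
positive probability. -/
theorem exists_sample (F : SimpleGraph (Fin n)) {δ l : ℝ} (hδ0 : 0 ≤ δ) (hδ1 : δ ≤ 1)
    (hl0 : 0 < l) (hl1 : l ≤ 1 / 2) (hn : 1 ≤ n)
    (hsmall : (4 : ℝ) ^ n * exp (-2 * n) + 1 / n < 1) :
    ∃ R ≤ F, (∀ X Y : Finset (Fin n), (cnt R (X ×ˢ Y) : ℝ) ≤
        δ * (1 + 2 * l) * cnt F (X ×ˢ Y) + 2 * n / l) ∧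
      ∀ x, δ * (1 - 2 * l) * dgr F x - 2 * log n / l ≤ dgr R x := by
  by_contra! hcon
  have h := PF_compl_ge F hδ0 hδ1 (Q := fun _ => False) (B₃ := fun _ => False)
    (B₄ := fun _ => False)
    (B₁ := fun G => ∃ X Y : Finset (Fin n),
      δ * (1 + 2 * l) * cnt F (X ×ˢ Y) + 2 * n / l < cnt G (X ×ˢ Y))
    (B₂ := fun G => ∃ x, (cnt G ({x} ×ˢ Finset.univ) : ℝ) <
      δ * (1 - 2 * l) * cnt F ({x} ×ˢ Finset.univ) - 2 * log n / l) (by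
      intro G hG h1 h2 _ _
      push Not at h1 h2
      obtain ⟨x, hx⟩ := hcon G hG h1
      rw [dgr_eq_cnt, dgr_eq_cnt] at hx
      exact absurd hx (not_lt.2 (h2 x)))
  have hF : PF F δ (fun _ => False) = 0 := by simp [PF]
  rw [hF] at h
  have h1 := PF_upper F hδ0 hδ1 hl0 hl1
  have h2 := PF_deg F hδ0 hδ1 hl0 hl1 hn
  linarith

set_option maxHeartbeats 1000000 in
/-- Sampling a sparse subgraph of `G \ H` at rate `δ` gives a graph satisfying `PR`. -/
theorem exists_sparse (hn : 3 ≤ n) {p ε l δ C : ℝ} (hε : 0 < ε) (hε1 : ε ≤ 1 / 10)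
    (hl : l = ε / 100) (hδ0 : 0 < δ) (hδ1 : δ ≤ 1) (hp : 0 < p) (hp1 : p ≤ 1)
    (hlog : 1 ≤ log n) (hnp : C * log n ≤ n * p) (hC : 35 ≤ δ * C * ε * l)
    (hsmall : (4 : ℝ) ^ n * exp (-2 * n) + 1 / n < 1)
    {G H : SimpleGraph (Fin n)}
    (hB1 : ∀ X Y : Finset (Fin n), (cnt G (X ×ˢ Y) : ℝ) ≤
      p * (1 + 2 * l) * cnt (⊤ : SimpleGraph (Fin n)) (X ×ˢ Y) + 2 * n / l)
    (hB2 : ∀ X Y : Finset (Fin n), (cnt G (X ×ˢ Y) : ℝ) ≤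
      2 * p * cnt (⊤ : SimpleGraph (Fin n)) (X ×ˢ Y) + 2 * (X.card + Y.card + 1) * log n)
    (hB3 : ∀ x, p * (1 - 2 * l) * cnt (⊤ : SimpleGraph (Fin n)) ({x} ×ˢ Finset.univ) -
      2 * log n / l ≤ cnt G ({x} ×ˢ Finset.univ))
    (hH : PosaFamily n p ε H) :
    ∃ R ≤ G \ H, PR R (δ * p) ε (6 / l) (2 / δ) := by
  have hl0 : 0 < l := by rw [hl]; positivity
  have hl1 : l ≤ 1 / 1000 := by rw [hl]; linarith
  have hn0 : (0 : ℝ) < n := by exact_mod_cast (by omega : 0 < n)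
  obtain ⟨R, hRF, hup, hlow⟩ :=
    exists_sample (G \ H) hδ0.le hδ1 hl0 (by linarith) (by omega) hsmall
  have hFG : G \ H ≤ G := sdiff_le
  refine ⟨R, hRF, ?_, ?_, ?_⟩
  · intro θ hθ0 hθ
    refine le_trans (Nat.cast_le.2 (Finset.card_le_card ?_)) (posa_highDeg hn hp.le hθ0 hθ hH)
    intro x hx
    rw [Finset.mem_filter] at hx ⊢
    refine ⟨Finset.mem_univ _, ?_⟩
    by_contra! hgood
    have hxlt := hx.2
    have h1 := hlow x
    have h2 := hB3 x
    rw [← dgr_eq_cnt, ← dgr_eq_cnt] at h2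
    have h3 : (dgr (⊤ : SimpleGraph (Fin n)) x : ℝ) = n - 1 := by
      have := dgr_top x
      have : (dgr (⊤ : SimpleGraph (Fin n)) x : ℝ) + 1 = n := by exact_mod_cast this
      linarith
    have h4 : (dgr G x : ℝ) ≤ dgr (G \ H) x + dgr H x := by
      exact_mod_cast dgr_le_sdiff_add G H x
    rw [h3] at h2
    set N : ℝ := n * p with hN
    set Λ : ℝ := log n / l with hΛ
    have hΛ1 : 1 ≤ Λ := by
      rw [hΛ, le_div_iff₀ hl0]; linarith
    have e1 : 2 * log n / l = 2 * Λ := by rw [hΛ]; ring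
    rw [e1] at h1 h2
    -- lower bound on the degree in `G \ H`
    have h5 : (θ + ε - 2 * l) * N - 3 - 2 * Λ ≤ dgr (G \ H) x := by
      have : p * (1 - 2 * l) * (n - 1) = (1 - 2 * l) * N - p * (1 - 2 * l) := by rw [hN]; ring
      nlinarith
    have h6 : δ * (1 - 2 * l) * ((θ + ε - 2 * l) * N - 3 - 2 * Λ) ≤
        δ * (1 - 2 * l) * dgr (G \ H) x :=
      mul_le_mul_of_nonneg_left h5 (mul_nonneg hδ0.le (by linarith))
    have hN0 : 0 ≤ N := by positivity
    have h7 : (θ + ε - 4 * l) * N ≤ (1 - 2 * l) * (θ + ε - 2 * l) * N := by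
      apply mul_le_mul_of_nonneg_right _ hN0
      nlinarith
    have h8 : 35 * Λ ≤ δ * ε * N := by
      have : 35 * Λ ≤ (δ * C * ε * l) * Λ := mul_le_mul_of_nonneg_right hC (by linarith)
      have e : (δ * C * ε * l) * Λ = δ * ε * (C * log n) := by
        rw [hΛ]; field_simp
      have := mul_le_mul_of_nonneg_left hnp (by positivity : 0 ≤ δ * ε)
      linarith
    have h9 : δ * ((θ + ε - 4 * l) * N) ≤ δ * ((1 - 2 * l) * (θ + ε - 2 * l) * N) :=
      mul_le_mul_of_nonneg_left h7 hδ0.le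
    have h10 : δ * (1 - 2 * l) * (3 + 2 * Λ) ≤ 1 * (3 + 2 * Λ) := by
      apply mul_le_mul_of_nonneg_right _ (by linarith)
      nlinarith
    have h11 : 4 * l ≤ ε / 20 := by rw [hl]; linarith
    have h12 : 0 ≤ δ * N := by positivity
    have e2 : (θ + 3 * ε / 4) * (δ * p * n) = (θ + 3 * ε / 4) * (δ * N) := by rw [hN]; ring
    rw [e2] at hxlt
    have h13 : δ * N * (4 * l) ≤ δ * N * (ε / 20) := mul_le_mul_of_nonneg_left h11 h12
    nlinarith
  · intro X Y
    have h1 := hup X Y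
    have h2 : (cnt (G \ H) (X ×ˢ Y) : ℝ) ≤ cnt G (X ×ˢ Y) := by exact_mod_cast cnt_mono hFG _
    have h3 := hB1 X Y
    have h4 := cnt_le_mul (⊤ : SimpleGraph (Fin n)) X Y
    set a : ℝ := (X.card : ℝ) * Y.card
    have ha : 0 ≤ a := by positivity
    have h5 : (cnt (G \ H) (X ×ˢ Y) : ℝ) ≤ p * (1 + 2 * l) * a + 2 * n / l := by
      have := mul_le_mul_of_nonneg_left h4 (by positivity : 0 ≤ p * (1 + 2 * l))
      linarith
    have h6 := mul_le_mul_of_nonneg_left h5 (by positivity : 0 ≤ δ * (1 + 2 * l))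
    have h7 : δ * (1 + 2 * l) * (2 * n / l) ≤ 2 * (2 * n / l) := by
      apply mul_le_mul_of_nonneg_right _ (by positivity)
      nlinarith
    have h8 : (1 + 2 * l) * (1 + 2 * l) * (δ * p * a) ≤ (1 + ε / 20) * (δ * p * a) := by
      apply mul_le_mul_of_nonneg_right _ (by positivity)
      nlinarith
    have e : 6 / l * n = 3 * (2 * n / l) := by ring
    rw [e]
    have e2 : δ * (1 + 2 * l) * (p * (1 + 2 * l) * a + 2 * n / l) =
        (1 + 2 * l) * (1 + 2 * l) * (δ * p * a) + δ * (1 + 2 * l) * (2 * n / l) := by ring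
    have e3 : (1 + ε / 20) * (δ * p) * a = (1 + ε / 20) * (δ * p * a) := by ring
    linarith
  · intro X Y
    have h1 : (cnt R (X ×ˢ Y) : ℝ) ≤ cnt G (X ×ˢ Y) := by
      exact_mod_cast cnt_mono (hRF.trans hFG) _
    have h2 := hB2 X Y
    have h3 := mul_le_mul_of_nonneg_left (cnt_le_mul (⊤ : SimpleGraph (Fin n)) X Y)
      (by positivity : 0 ≤ 2 * p)
    have e : 2 / δ * (δ * p) = 2 * p := by field_simp
    rw [e]
    linarith

/-- Every graph outside the four exceptional events is resilient. -/
theorem hamiltonian_core (hn : 3 ≤ n) {p ε l μ C : ℝ} (hε : 0 < ε) (hε1 : ε ≤ 1 / 10)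
    (hl : l = ε / 100) (hμ0 : 0 < μ) (hμ1 : μ ≤ 1) (hp : 0 < p) (hp1 : p ≤ 1)
    (hlog : 1 ≤ log n) (hnp : C * log n ≤ n * p) (hC : 35 ≤ μ / 2 * C * ε * l)
    (hC2 : 6 / l + 2 ≤ μ * C) (hnε : 4 < ε * n)
    (hsmall : (4 : ℝ) ^ n * exp (-2 * n) + 1 / n < 1)
    (hdet : ∀ R : SimpleGraph (Fin n), PR R (μ / 2 * p) ε (6 / l) (2 / (μ / 2)) →
      (∀ (Γ : SimpleGraph (Fin n)) (m : ℕ) (p0 : ℕ → Fin n), R ≤ Γ → IsP Γ m p0 →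
        NoLonger Γ m → ∃ t, (1 / 2 + ε / 4) * n ≤ (heads Γ m p0 t).card) ∧
      (∀ Z : Finset (Fin n), Z.Nonempty → 2 * Z.card ≤ n → ∃ x ∈ Z, ∃ y ∉ Z, R.Adj x y))
    {G H : SimpleGraph (Fin n)}
    (hB1 : ∀ X Y : Finset (Fin n), (cnt G (X ×ˢ Y) : ℝ) ≤
      p * (1 + 2 * l) * cnt (⊤ : SimpleGraph (Fin n)) (X ×ˢ Y) + 2 * n / l)
    (hB2 : ∀ X Y : Finset (Fin n), (cnt G (X ×ˢ Y) : ℝ) ≤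
      2 * p * cnt (⊤ : SimpleGraph (Fin n)) (X ×ˢ Y) + 2 * (X.card + Y.card + 1) * log n)
    (hB3 : ∀ x, p * (1 - 2 * l) * cnt (⊤ : SimpleGraph (Fin n)) ({x} ×ˢ Finset.univ) -
      2 * log n / l ≤ cnt G ({x} ×ˢ Finset.univ))
    (hB4 : ∀ Γ ≤ G, (Γ.edgeFinset.card : ℝ) ≤ μ * (n ^ 2 * p) →
      ∀ S : Finset (Fin n), ε / 4 * n ≤ S.card → (∀ v ∈ S, (n : ℝ) / 2 ≤ (ends Γ v).card) →
      (1 - 4 * l) * p * cnt (⊤ : SimpleGraph (Fin n)) (pairSet S (ends Γ)) ≤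
        cnt G (pairSet S (ends Γ)))
    (hH : PosaFamily n p ε H) :
    ∃ (v : Fin n) (w : (G \ H).Walk v v), w.IsCycle ∧ w.length = n := by
  have hl0 : 0 < l := by rw [hl]; positivity
  have hl1 : l ≤ 1 / 1000 := by rw [hl]; linarith
  have hn0 : (0 : ℝ) < n := by exact_mod_cast (by omega : 0 < n)
  obtain ⟨R, hRF, hPR⟩ := exists_sparse hn hε hε1 hl (by positivity : 0 < μ / 2) (by linarith)
    hp hp1 hlog hnp hC hsmall hB1 hB2 hB3 hH
  obtain ⟨h₁, h₂⟩ := hdet R hPR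
  refine hamiltonian_of_rotations hn hε hRF h₁ h₂ ?_
  intro Γ hΓ hΓc S₀ hS₀ hends
  -- the sparse graph together with a path has at most `μ n² p` edges
  have hedges : (Γ.edgeFinset.card : ℝ) ≤ μ * (n ^ 2 * p) := by
    have h1 : (Γ.edgeFinset.card : ℝ) ≤ R.edgeFinset.card + n := by exact_mod_cast hΓc
    have h2 : 2 * (R.edgeFinset.card : ℝ) = cnt R (Finset.univ ×ˢ Finset.univ) := by
      exact_mod_cast two_mul_card_edges R
    have h3 := hPR.e2 Finset.univ Finset.univ
    rw [Finset.card_univ, Fintype.card_fin] at h3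
    have h4 : (1 + ε / 20) * (μ / 2 * p) * (n * n) ≤ 2 * (μ / 2 * p) * (n * n) := by
      gcongr
      linarith
    have h5 : (6 / l + 2) * n ≤ μ * (n * p) * n := by
      apply mul_le_mul_of_nonneg_right _ hn0.le
      have hC0 : 0 ≤ μ * C := le_trans (by positivity) hC2
      have := mul_le_mul_of_nonneg_left hlog hC0
      have := mul_le_mul_of_nonneg_left hnp hμ0.le
      linarith
    nlinarith
  set bad := Finset.univ.filter fun x => (1 - 1 / 2 - ε) * (n * p) + 2 * p < dgr H x with hbad
  have hbadc : (bad.card : ℝ) ≤ 1 / 2 * n := posa_highDeg hn hp.le (by norm_num) le_rfl hH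
  set S := S₀ \ bad with hS
  have hSc : ε / 4 * n ≤ S.card := by
    have : S₀.card ≤ S.card + bad.card := by
      have := Finset.card_le_card_sdiff_add_card (s := S₀) (t := bad)
      rw [hS]; omega
    have : (S₀.card : ℝ) ≤ S.card + bad.card := by exact_mod_cast this
    linarith
  have hSpos : (0 : ℝ) < S.card := lt_of_lt_of_le (by positivity) hSc
  have hSends : ∀ v ∈ S, (n : ℝ) / 2 ≤ (ends Γ v).card := fun v hv =>
    hends v (Finset.mem_sdiff.1 hv).1
  have hboost := hB4 Γ (hΓ.trans sdiff_le) hedges S hSc hSends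
  have htop := cnt_top_pairSet rfl S (ends Γ) hSends
  by_contra! hno
  have hcntle : (cnt G (pairSet S (ends Γ)) : ℝ) ≤
      S.card * ((1 - 1 / 2 - ε) * (n * p) + 2 * p) := by
    rw [cnt_pairSet, Nat.cast_sum, ← nsmul_eq_mul]
    refine Finset.sum_le_card_nsmul _ _ _ fun v hv => ?_
    have hvb : ¬ ((1 - 1 / 2 - ε) * (n * p) + 2 * p < dgr H v) := fun h =>
      (Finset.mem_sdiff.1 hv).2 (Finset.mem_filter.2 ⟨Finset.mem_univ _, h⟩)
    refine le_trans (Nat.cast_le.2 (Finset.card_le_card ?_)) (not_lt.1 hvb)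
    intro w hw
    rw [Finset.mem_filter] at hw ⊢
    refine ⟨Finset.mem_univ _, ?_⟩
    by_contra hHvw
    exact hno v (Finset.mem_sdiff.1 hv).1 w hw.1 ((SimpleGraph.sdiff_adj _ _ _ _).2 ⟨hw.2, hHvw⟩)
  have h1 : (1 - 4 * l) * p * (S.card * ((n : ℝ) / 2 - 1)) ≤
      S.card * ((1 - 1 / 2 - ε) * (n * p) + 2 * p) := by
    refine le_trans (mul_le_mul_of_nonneg_left htop ?_) (hboost.trans hcntle)
    exact mul_nonneg (by linarith) hp.le
  have h2 : (p * S.card) * ((1 - 4 * l) * ((n : ℝ) / 2 - 1)) ≤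
      (p * S.card) * ((1 / 2 - ε) * n + 2) := by nlinarith
  have h3 := le_of_mul_le_mul_left h2 (by positivity)
  have h4 : 2 * l * n ≤ ε / 50 * n := by rw [hl]; nlinarith
  nlinarith

end Core

/-! ### Choice of constants -/

section Final

theorem PosaFamily.anti {n : ℕ} {p ε ε' : ℝ} (hp : 0 ≤ p) (h : ε' ≤ ε)
    {H : SimpleGraph (Fin n)} (hH : PosaFamily n p ε H) : PosaFamily n p ε' H := by
  obtain ⟨v, hv, ha, hd⟩ := hH
  refine ⟨v, hv, ha, fun i hi => (hd i hi).trans ?_⟩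
  have : ε' * n * p ≤ ε * n * p := by gcongr
  linarith

/-- All error terms are uniformly small for large `n`. -/
theorem eventually_small {η : ℝ} (hη : 0 < η) :
    ∀ᶠ n : ℕ in atTop, (4 : ℝ) ^ n * exp (-2 * n) ≤ η ∧ exp 2 / n ≤ η ∧ 1 / (n : ℝ) ≤ η ∧
      exp (-(n : ℝ)) ≤ η := by
  have hinv : ∀ c : ℝ, Tendsto (fun n : ℕ => c / (n : ℝ)) atTop (nhds 0) := fun c =>
    tendsto_const_div_atTop_nhds_zero_nat c
  have h4 : Tendsto (fun n : ℕ => exp (-(n : ℝ))) atTop (nhds 0) :=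
    tendsto_exp_neg_atTop_nhds_zero.comp tendsto_natCast_atTop_atTop
  have h1 : Tendsto (fun n : ℕ => (4 : ℝ) ^ n * exp (-2 * n)) atTop (nhds 0) := by
    have e : (fun n : ℕ => (4 : ℝ) ^ n * exp (-2 * n)) = fun n : ℕ => (4 * exp (-2)) ^ n := by
      funext n
      rw [mul_pow, ← exp_nat_mul]
      ring_nf
    rw [e]
    apply tendsto_pow_atTop_nhds_zero_of_lt_one (by positivity)
    have h2 : (4 : ℝ) < exp 2 := by
      have h := exp_one_gt_d9
      have e2 : exp 2 = exp 1 * exp 1 := by rw [← exp_add]; norm_num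
      rw [e2]; nlinarith
    rw [exp_neg, ← div_eq_mul_inv, div_lt_one (exp_pos _)]
    exact h2
  filter_upwards [h1.eventually_le_const hη, (hinv (exp 2)).eventually_le_const hη,
    (hinv 1).eventually_le_const hη, h4.eventually_le_const hη] with n a b c d
  exact ⟨a, b, c, d⟩

theorem PF_ge_of_bounds {n : ℕ} {F : SimpleGraph (Fin n)} {q η : ℝ} (h0 : 0 ≤ q) (h1 : q ≤ 1)
    {Q B₁ B₂ B₃ B₄ : SimpleGraph (Fin n) → Prop}
    (hb1 : PF F q B₁ ≤ η / 4) (hb2 : PF F q B₂ ≤ η / 4) (hb3 : PF F q B₃ ≤ η / 4)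
    (hb4 : PF F q B₄ ≤ η / 4)
    (h : ∀ G ≤ F, ¬ B₁ G → ¬ B₂ G → ¬ B₃ G → ¬ B₄ G → Q G) : 1 - η ≤ PF F q Q := by
  have := PF_compl_ge F h0 h1 h
  linarith

end Final

/-- Theorem 1.2, resilience version of Pósa's theorem.
For every `ε > 0` there exists `C > 0` such that, whenever `p ≥ C log n / n`, a.a.s.
for every subgraph `H ∈ H^ε_{n,p}(G_{n,p})` the graph `G_{n,p} ∖ H` is Hamiltonian. -/
theorem posa_resilience_hamiltonicity (ε : ℝ) (hε : 0 < ε) :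
    ∃ C : ℝ, 0 < C ∧ ∀ η : ℝ, 0 < η → ∃ N : ℕ, ∀ n : ℕ, N ≤ n →
      ∀ p : ℝ, C * Real.log n / n ≤ p → p ≤ 1 →
        1 - η ≤ Pr n p (fun G =>
          ∀ H : SimpleGraph (Fin n), H ≤ G → PosaFamily n p ε H →
            (G \ H).IsHamiltonian) := by
  classical
  -- a smaller `ε` gives a larger family, so `ε ≤ 1 / 10` may be assumed
  obtain ⟨ε₀, hε₀, hε₁, hεle⟩ : ∃ ε₀ : ℝ, 0 < ε₀ ∧ ε₀ ≤ 1 / 10 ∧ ε₀ ≤ ε :=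
    ⟨min ε (1 / 10), lt_min hε (by norm_num), min_le_right _ _, min_le_left _ _⟩
  obtain ⟨l, hl⟩ : ∃ l, l = ε₀ / 100 := ⟨_, rfl⟩
  have hl0 : 0 < l := by rw [hl]; positivity
  have hl1 : l ≤ 1 / 1000 := by rw [hl]; linarith
  obtain ⟨c, hc⟩ : ∃ c, c = l ^ 2 * (ε₀ / 4) / 4 := ⟨_, rfl⟩
  have hc0 : 0 < c := by rw [hc]; positivity
  have hc1 : c ≤ 1 := by
    rw [hc]
    have : l ^ 2 ≤ 1 := by nlinarith
    nlinarith
  -- the parameters of the union bound over sparse graphs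
  obtain ⟨θ, hθ0, hθ⟩ : ∃ θ : ℝ, 0 ≤ θ ∧ exp (-θ) ≤ c / 2 := by
    refine ⟨-log (c / 2), ?_, ?_⟩
    · have := log_nonpos (by positivity : 0 ≤ c / 2) (by linarith)
      linarith
    · rw [neg_neg, exp_log (by positivity)]
  obtain ⟨μ, hμ0, hμ1, hμ⟩ : ∃ μ : ℝ, 0 < μ ∧ μ ≤ 1 ∧ (θ + 2 * l) * μ ≤ c / 2 := by
    refine ⟨c / 2 / (θ + 1), by positivity, ?_, ?_⟩
    · rw [div_le_one (by positivity)]; linarith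
    · rw [mul_div_assoc', div_le_iff₀ (by positivity)]
      nlinarith
  obtain ⟨L, hL0, hL⟩ := det ε₀ (6 / l) (2 / (μ / 2)) hε₀ hε₁ (by positivity) (by positivity)
  obtain ⟨C, hC⟩ : ∃ C, C = 70 / (μ * ε₀ * l) + (6 / l + 2) / μ + 2 * L / μ + 2 / c := ⟨_, rfl⟩
  have hp1 : 0 < 70 / (μ * ε₀ * l) := by positivity
  have hp2 : 0 < (6 / l + 2) / μ := by positivity
  have hp3 : 0 < 2 * L / μ := by positivity
  have hp4 : 0 < 2 / c := by positivity
  have hC0 : 0 < C := by rw [hC]; positivity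
  have hCa : 35 ≤ μ / 2 * C * ε₀ * l := by
    have : 70 / (μ * ε₀ * l) ≤ C := by linarith
    rw [div_le_iff₀ (by positivity)] at this
    linarith
  have hCb : 6 / l + 2 ≤ μ * C := by
    have : (6 / l + 2) / μ ≤ C := by linarith
    rw [div_le_iff₀ hμ0] at this
    linarith
  have hCc : L ≤ μ / 2 * C := by
    have : 2 * L / μ ≤ C := by linarith
    rw [div_le_iff₀ hμ0] at this
    linarith
  have hCd : 2 ≤ c * C := by
    have : 2 / c ≤ C := by linarith
    rw [div_le_iff₀ hc0] at this
    linarith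
  refine ⟨C, hC0, fun η hη => ?_⟩
  have hlogev : ∀ᶠ n : ℕ in atTop, (1 : ℝ) ≤ log n :=
    (tendsto_log_atTop.comp tendsto_natCast_atTop_atTop).eventually_ge_atTop 1
  have hεev : ∀ᶠ n : ℕ in atTop, 4 / ε₀ < (n : ℝ) :=
    tendsto_natCast_atTop_atTop.eventually_gt_atTop _
  obtain ⟨N, hN⟩ := eventually_atTop.1 ((((hL.and hlogev).and hεev).and
    ((eventually_small (by positivity : 0 < η / 4)).and
      (eventually_small (by norm_num : (0 : ℝ) < 1 / 4)))).and (eventually_ge_atTop 4))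
  refine ⟨N, fun n hn p hCp hp1 => ?_⟩
  obtain ⟨⟨⟨⟨hdet, hlog⟩, hnε⟩, ⟨s1, s2, s3, s4⟩, ⟨r1, -, r3, -⟩⟩, hn4⟩ := hN n hn
  have hn0 : (0 : ℝ) < n := by exact_mod_cast (by omega : 0 < n)
  have hnp : C * log n ≤ n * p := by
    rw [div_le_iff₀ hn0] at hCp
    linarith
  have hp : 0 < p := lt_of_lt_of_le (by positivity) hCp
  rw [div_lt_iff₀ hε₀] at hnε
  have hb1 := PF_upper (⊤ : SimpleGraph (Fin n)) hp.le hp1 hl0 (by linarith : l ≤ 1 / 2)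
  have hb2 := PF_log (⊤ : SimpleGraph (Fin n)) hp.le hp1 (by omega)
  have hb3 := PF_deg (⊤ : SimpleGraph (Fin n)) hp.le hp1 hl0 (by linarith : l ≤ 1 / 2) (by omega)
  have hb4 := PF_boost (rfl : (⊤ : SimpleGraph (Fin n)) = ⊤) hp hp1 hl0
    (by linarith : l ≤ 1 / 2) hn4 hθ0 (κ := ε₀ / 4) (μ := μ) (by rw [← hc]; linarith) ends
  have hb4' : (2 : ℝ) ^ n * exp (-(l ^ 2 * (ε₀ / 4) / 4) * (n ^ 2 * p)) ≤ η / 4 := by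
    refine le_trans ?_ s4
    have h2 : (2 : ℝ) ^ n ≤ exp n := by
      have := add_one_le_exp (1 : ℝ)
      have h3 : (2 : ℝ) ^ n ≤ exp 1 ^ n := pow_le_pow_left₀ (by norm_num) (by linarith) n
      rwa [← exp_nat_mul, mul_one] at h3
    refine (mul_le_mul_of_nonneg_right h2 (exp_pos _).le).trans ?_
    rw [← exp_add, exp_le_exp, ← hc]
    have h3 : 2 * (n : ℝ) ≤ c * (n * p) * n := by
      apply mul_le_mul_of_nonneg_right _ hn0.le
      have h4 := mul_le_mul_of_nonneg_left hnp hc0.le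
      have h5 := mul_le_mul_of_nonneg_left hlog (by positivity : 0 ≤ c * C)
      linarith
    nlinarith
  rw [PF_top]
  refine PF_ge_of_bounds hp.le hp1 (hb1.trans s1) (hb2.trans s2) (hb3.trans s3)
    (hb4.trans hb4') fun G _ h1 h2 h3 h4 H _ hH => ?_
  push Not at h1 h2 h3 h4
  obtain ⟨v, w, hw, hwl⟩ := hamiltonian_core (by omega : 3 ≤ n) hε₀ hε₁ hl hμ0 hμ1 hp hp1 hlog
    hnp hCa hCb (by linarith) (by linarith) (fun R hR => hdet _ R (by
      have h5 := mul_le_mul_of_nonneg_right hCc (by linarith : 0 ≤ log n)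
      have h6 := mul_le_mul_of_nonneg_left hnp (by positivity : 0 ≤ μ / 2)
      linarith) hR) h1 h2 h3 h4 (hH.anti hp.le hεle)
  refine fun _ => ⟨v, w, ?_⟩
  rw [SimpleGraph.Walk.isHamiltonianCycle_iff_isCycle_and_length_eq]
  exact ⟨hw, by rw [hwl, Fintype.card_fin]⟩

end Resilience
end

section
/- For every 0 < ε < 10^{-6} there exists C > 0 such that, whenever C log n / n ≤ p ≤ 1/25, the binomial random graph G_{n,p} asymptotically almost surely is NOT ε-Chvátal-resilient with respect to containing a perfect matching; that is, a.a.s. there exists a subgraph H ∈ H^{ε,0}_{n,p}(G_{n,p}) such that G_{n,p} ∖ H has no perfect matching. -/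
/-!
The obstruction to a perfect matching is a set `A` that is independent in `G ∖ H` and whose
neighbourhood there lies in a set `B` with `|B| = |A| - 1`; here `H` consists of all edges of `G`
that meet `A` and avoid `B`. Vertices of `A` have large degree in `H` (about `(n - |B|)p`), vertices
of `B` are isolated in `H`, and every other vertex has degree about `|A|p`.

With `|A|` vertices of large degree, the family condition at `i ≤ |A|` asks for `d_H(v_{n-i})` to be
small, that is, for at least `|A| + 1` vertices of low degree, whereas `B` supplies only `|A| - 1`.
The two missing ones are obtained by fixing two vertices `x, y` and choosing `A` outside
`N(x) ∪ N(y)`, which makes `x` and `y` isolated in `H`. Since `p ≤ 1/25`, this costs only a small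
fraction of the candidates for `A`.

Concretely `B` is an initial segment of `n/5` vertices, `A` is chosen inside the following segment
`A₀` of `n/4` vertices, and `x, y` are the last two vertices (`exists_H`). The only probabilistic
input is that every vertex has at most `0.45np` neighbours in `A₀` and at most `0.95np` neighbours
outside `B`; this follows from a Chernoff bound (`Pr_edges_tail`), which is derived from the
product formula `sum_weight_mul_prod` for the moment generating function, and a union bound.
-/

open Filter Real

namespace Resilience

variable {V : Type*}

/-! ### Chernoff bound for the binomial random graph -/

open Classical in
/-- The expectation of a product over the edges of `G_{n,p}` factorizes, as the edges are
independent. -/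
lemma sum_weight_mul_prod (n : ℕ) (p : ℝ) (w : Sym2 (Fin n) → ℝ) :
    ∑ G : SimpleGraph (Fin n), weight n p G * ∏ e ∈ G.edgeFinset, w e
      = ∏ e ∈ (⊤ : SimpleGraph (Fin n)).edgeFinset, (p * w e + (1 - p)) := by
  rw [Finset.prod_add]
  refine Finset.sum_bij' (fun G _ => G.edgeFinset)
    (fun s _ => SimpleGraph.fromEdgeSet (s : Set (Sym2 (Fin n)))) ?_ ?_ ?_ ?_ ?_
  · intro G _
    rw [Finset.mem_powerset]
    exact SimpleGraph.edgeFinset_mono le_top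
  · intro s _
    exact Finset.mem_univ _
  · intro G _
    simp
  · intro s hs
    rw [Finset.mem_powerset] at hs
    ext e
    have h : e ∈ s → ¬ e.IsDiag := fun he => by
      have := hs he
      rw [SimpleGraph.mem_edgeFinset] at this
      exact SimpleGraph.not_isDiag_of_mem_edgeSet _ this
    refine Iff.trans (@SimpleGraph.mem_edgeFinset _ _ _ (_)) ?_
    simpa [SimpleGraph.edgeSet_fromEdgeSet] using h
  · intro G _
    have hsub : G.edgeFinset ⊆ (⊤ : SimpleGraph (Fin n)).edgeFinset :=
      SimpleGraph.edgeFinset_mono le_top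
    have hc : (⊤ : SimpleGraph (Fin n)).edgeFinset.card = n.choose 2 := by
      rw [SimpleGraph.card_edgeFinset_top_eq_card_choose_two, Fintype.card_fin]
    have hn : G.edgeSet.ncard = G.edgeFinset.card := Set.ncard_eq_toFinset_card' _
    rw [Finset.prod_mul_distrib, Finset.prod_const, Finset.prod_const,
      Finset.card_sdiff_of_subset hsub, hc, weight, hn]
    ring

lemma sum_weight (n : ℕ) (p : ℝ) : ∑ G : SimpleGraph (Fin n), weight n p G = 1 := by
  have := sum_weight_mul_prod n p (fun _ => 1)
  simpa using this

lemma weight_nonneg {n : ℕ} {p : ℝ} (h0 : 0 ≤ p) (h1 : p ≤ 1) (G : SimpleGraph (Fin n)) :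
    0 ≤ weight n p G := by
  unfold weight
  have : 0 ≤ 1 - p := by linarith
  positivity

open Classical in
/-- Chernoff bound for the number of edges of `G_{n,p}` in a fixed set `T` of pairs, with the
exponential parameter fixed to `1/10` and `e^{1/10} - 1` bounded by `11/100`. -/
lemma Pr_edges_tail {n : ℕ} {p : ℝ} (h0 : 0 ≤ p) (h1 : p ≤ 1) (T : Finset (Sym2 (Fin n))) (t : ℝ) :
    Pr n p (fun G => t < ((T.filter (fun e => e ∈ G.edgeSet)).card : ℝ))
      ≤ Real.exp (T.card * p * (11 / 100) - t / 10) := by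
  set w : Sym2 (Fin n) → ℝ := fun e => if e ∈ T then Real.exp (1 / 10) else 1 with hw
  have hexp : Real.exp (1 / 10) ≤ 1 + 11 / 100 := by
    have := Real.abs_exp_sub_one_sub_id_le (x := 1 / 10) (by norm_num [abs_of_pos])
    have := (abs_le.1 this).2
    linarith
  -- the product of the weights `w` over the edges of `G` is `exp (|E(G) ∩ T| / 10)`
  have hprod : ∀ G : SimpleGraph (Fin n), ∏ e ∈ G.edgeFinset, w e
      = Real.exp ((T.filter (fun e => e ∈ G.edgeSet)).card * (1 / 10)) := by
    intro G
    rw [hw, Finset.prod_ite, Finset.prod_const, Finset.prod_const_one, mul_one, Real.exp_nat_mul]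
    congr 2
    ext e
    simp [and_comm]
  have hbound : ∏ e ∈ (⊤ : SimpleGraph (Fin n)).edgeFinset, (p * w e + (1 - p))
      ≤ Real.exp (T.card * p * (11 / 100)) := by
    have hE : ∀ e, p * w e + (1 - p) = if e ∈ T then p * Real.exp (1 / 10) + (1 - p) else 1 := by
      intro e
      simp only [hw]
      split_ifs <;> ring
    have hbase : p * Real.exp (1 / 10) + (1 - p) ≤ Real.exp (p * (11 / 100)) := by
      have := Real.add_one_le_exp (p * (11 / 100))
      nlinarith
    have hbase0 : 0 ≤ p * Real.exp (1 / 10) + (1 - p) := by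
      have := mul_nonneg h0 (Real.exp_pos (1 / 10)).le
      linarith
    simp_rw [hE]
    rw [Finset.prod_ite, Finset.prod_const, Finset.prod_const_one, mul_one]
    calc _ ≤ (Real.exp (p * (11 / 100))) ^ ((⊤ : SimpleGraph (Fin n)).edgeFinset.filter
            (fun e => e ∈ T)).card := pow_le_pow_left₀ hbase0 hbase _
      _ ≤ (Real.exp (p * (11 / 100))) ^ T.card := by
          apply pow_le_pow_right₀ (Real.one_le_exp (by positivity))
          apply Finset.card_le_card
          intro e he
          exact (Finset.mem_filter.1 he).2
      _ = _ := by rw [← Real.exp_nat_mul]; ring_nf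
  have key : Pr n p (fun G => t < ((T.filter (fun e => e ∈ G.edgeSet)).card : ℝ))
      ≤ Real.exp (-t / 10) * ∑ G : SimpleGraph (Fin n),
          weight n p G * ∏ e ∈ G.edgeFinset, w e := by
    unfold Pr
    rw [Finset.mul_sum]
    apply Finset.sum_le_sum
    intro G _
    rw [hprod G]
    have hw0 := weight_nonneg h0 h1 G
    split_ifs with h
    · rw [mul_left_comm, ← Real.exp_add]
      apply le_mul_of_one_le_right hw0
      apply Real.one_le_exp
      linarith
    · positivity
  refine key.trans ?_
  rw [sum_weight_mul_prod]
  refine (mul_le_mul_of_nonneg_left hbound (Real.exp_pos _).le).trans (le_of_eq ?_)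
  rw [← Real.exp_add]
  ring_nf

open Classical in
/-- The number of neighbours of `v` in `S`. -/
noncomputable def dIn {n : ℕ} (G : SimpleGraph (Fin n)) (v : Fin n) (S : Finset (Fin n)) : ℕ :=
  (S.filter (fun u => G.Adj v u)).card

lemma Pr_mono {n : ℕ} {p : ℝ} (h0 : 0 ≤ p) (h1 : p ≤ 1) {Q R : SimpleGraph (Fin n) → Prop}
    (h : ∀ G, Q G → R G) : Pr n p Q ≤ Pr n p R := by
  unfold Pr
  apply Finset.sum_le_sum
  intro G _
  have hw0 := weight_nonneg h0 h1 G
  by_cases hQ : Q G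
  · simp [hQ, h G hQ]
  · rw [if_neg hQ]
    split_ifs <;> simp [hw0]

lemma Pr_dIn_tail {n : ℕ} {p : ℝ} (h0 : 0 ≤ p) (h1 : p ≤ 1) (v : Fin n) (S : Finset (Fin n))
    (t : ℝ) :
    Pr n p (fun G => t < (dIn G v S : ℝ)) ≤ Real.exp (S.card * p * (11 / 100) - t / 10) := by
  classical
  have hT : (S.image (fun u => s(v, u))).card ≤ S.card := Finset.card_image_le
  refine (Pr_mono h0 h1 ?_).trans ((Pr_edges_tail h0 h1 (S.image (fun u => s(v, u))) t).trans ?_)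
  · intro G hG
    refine hG.trans_le ?_
    rw [Nat.cast_le]
    unfold dIn
    apply Finset.card_le_card_of_injOn (fun u => s(v, u))
    · intro u hu
      simp only [Finset.coe_filter, Set.mem_ofPred_eq] at hu
      simp only [Finset.coe_filter, Set.mem_ofPred_eq, SimpleGraph.mem_edgeSet]
      exact ⟨Finset.mem_image_of_mem _ hu.1, hu.2⟩
    · intro a _ b _ hab
      exact Sym2.congr_right.1 hab
  · apply Real.exp_le_exp.2
    have : ((S.image (fun u => s(v, u))).card : ℝ) ≤ S.card := by exact_mod_cast hT
    have := mul_le_mul_of_nonneg_right this h0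
    linarith

/-- Union bound: if outside of the events `bad v` the property `Q` holds, then `Q` fails with
probability at most `∑ v, Pr (bad v)`. -/
lemma Pr_ge_of_bad {n : ℕ} {p : ℝ} (h0 : 0 ≤ p) (h1 : p ≤ 1) {ι : Type*} [Fintype ι]
    (Q : SimpleGraph (Fin n) → Prop) (bad : ι → SimpleGraph (Fin n) → Prop)
    (h : ∀ G, (∀ v, ¬ bad v G) → Q G) :
    1 - ∑ v, Pr n p (bad v) ≤ Pr n p Q := by
  classical
  have : (1 : ℝ) ≤ Pr n p Q + ∑ v, Pr n p (bad v) := by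
    rw [← sum_weight n p]
    unfold Pr
    rw [Finset.sum_comm, ← Finset.sum_add_distrib]
    apply Finset.sum_le_sum
    intro G _
    have hw0 := weight_nonneg h0 h1 G
    have hnn : ∀ v, 0 ≤ (if bad v G then weight n p G else 0) := by
      intro v; split_ifs <;> simp [hw0]
    by_cases hb : ∀ v, ¬ bad v G
    · rw [if_pos (h G hb)]
      have := Finset.sum_nonneg (fun v (_ : v ∈ Finset.univ) => hnn v)
      convert le_add_of_nonneg_right this
    · push Not at hb
      obtain ⟨v, hv⟩ := hb
      have h1 := Finset.single_le_sum (fun v _ => hnn v) (Finset.mem_univ v)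
      rw [if_pos hv] at h1
      have h2 : 0 ≤ (if Q G then weight n p G else 0) := by split_ifs <;> simp [hw0]
      convert h1.trans (le_add_of_nonneg_left h2)
  linarith

/-! ### Deterministic construction -/

/-- In a non-increasing enumeration of the values of `f`, the value at (0-based) position `j` is at
most `c` whenever at most `j` values exceed `c`. -/
lemma le_of_card_le {n : ℕ} (f : Fin n → ℕ) (v : Fin n → Fin n) (hv : Function.Bijective v)
    (hmono : ∀ i j : Fin n, i ≤ j → f (v j) ≤ f (v i)) (c : ℝ) (S : Finset (Fin n))
    (hS : ∀ u, u ∉ S → (f u : ℝ) ≤ c) (j : Fin n) (hj : S.card ≤ j.1) :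
    (f (v j) : ℝ) ≤ c := by
  by_contra hlt
  push Not at hlt
  have : (Finset.Iic j).card ≤ S.card := by
    apply Finset.card_le_card_of_injOn v
    · intro i hi
      by_contra hns
      have h1 := hS (v i) hns
      have h2 : (f (v j) : ℝ) ≤ f (v i) := by
        exact_mod_cast hmono i j (Finset.mem_Iic.1 hi)
      linarith
    · exact hv.1.injOn
  rw [Fin.card_Iic] at this
  omega

lemma exists_sorting {n : ℕ} (f : Fin n → ℕ) : ∃ v : Fin n → Fin n, Function.Bijective v ∧
    ∀ i j : Fin n, i ≤ j → f (v j) ≤ f (v i) := by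
  refine ⟨fun i => Tuple.sort f (Fin.rev i), ?_, ?_⟩
  · exact (Tuple.sort f).bijective.comp Fin.rev_bijective
  · intro i j hij
    exact Tuple.monotone_sort f (Fin.rev_le_rev.2 hij)

lemma deg_le_dIn {n : ℕ} {G H : SimpleGraph (Fin n)} {u : Fin n} {S : Finset (Fin n)}
    (h : ∀ w, H.Adj u w → w ∈ S ∧ G.Adj u w) : deg H u ≤ dIn G u S := by
  classical
  unfold deg dIn
  rw [← Set.ncard_coe_finset]
  apply Set.ncard_le_ncard _ (Finset.finite_toSet _)
  intro w hw
  simpa using h w hw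

/-- The graph to be deleted: the edges of `G` that join `A` to the complement of `B`. After the
deletion every vertex of `A` has all its neighbours in `B`. -/
def obstruction {n : ℕ} (G : SimpleGraph (Fin n)) (A B : Finset (Fin n)) :
    SimpleGraph (Fin n) where
  Adj u w := G.Adj u w ∧ ((u ∈ A ∧ w ∉ B) ∨ (w ∈ A ∧ u ∉ B))
  symm := ⟨fun _ _ h => ⟨h.1.symm, h.2.symm⟩⟩
  loopless := ⟨fun _ h => G.irrefl h.1⟩

lemma no_perfectMatching {n : ℕ} (G : SimpleGraph (Fin n)) {A B : Finset (Fin n)}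
    (hAB : B.card < A.card) (M : (G \ obstruction G A B).Subgraph) : ¬ M.IsPerfectMatching := by
  intro hM
  have hex : ∀ v, ∃ w, M.Adj v w := fun v => (hM.1 (hM.2 v)).exists
  choose m hm using hex
  have : A.card ≤ B.card := by
    apply Finset.card_le_card_of_injOn m
    · intro a ha
      by_contra hb
      have := (hm a).adj_sub
      rw [SimpleGraph.sdiff_adj] at this
      exact this.2 ⟨this.1, Or.inl ⟨ha, hb⟩⟩
    · intro a _ b _ hab
      refine (hM.1 (hM.2 (m a))).unique (hm a).symm ?_
      rw [hab]
      exact (hm b).symm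
  omega

/-- A graph in which no vertex has too many neighbours in the segment `A₀` or outside the
segment `B` is not Chvátal-resilient. -/
lemma exists_H {n : ℕ} {p ε : ℝ} (hn : 1000 ≤ n) (hε' : ε < 1 / 1000000)
    (h0 : 0 ≤ p) (hp : p ≤ 1 / 25) (G : SimpleGraph (Fin n))
    (h1 : ∀ v, (dIn G v (Finset.univ.filter (fun u : Fin n => n / 5 ≤ u.1 ∧ u.1 < n / 5 + n / 4)) : ℝ)
      ≤ 45 / 100 * (n * p))
    (h2 : ∀ v, (dIn G v (Finset.univ.filter (fun u : Fin n => n / 5 ≤ u.1)) : ℝ)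
      ≤ 95 / 100 * (n * p)) :
    ∃ H : SimpleGraph (Fin n), H ≤ G ∧ ChvatalFamily n p ε 0 H ∧
      ∀ M : (G \ H).Subgraph, ¬ M.IsPerfectMatching := by
  classical
  have hnR : (1000 : ℝ) ≤ n := by exact_mod_cast hn
  have hnp : 0 ≤ n * p := by positivity
  set A₀ : Finset (Fin n) :=
    Finset.univ.filter (fun u : Fin n => n / 5 ≤ u.1 ∧ u.1 < n / 5 + n / 4) with hA₀
  set Bc : Finset (Fin n) := Finset.univ.filter (fun u : Fin n => n / 5 ≤ u.1) with hBc
  set B : Finset (Fin n) := Finset.univ.filter (fun u : Fin n => u.1 < n / 5) with hB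
  set x : Fin n := ⟨n - 1, by omega⟩ with hx
  set y : Fin n := ⟨n - 2, by omega⟩ with hy
  have hBcard : B.card = n / 5 := by
    rw [hB, Fin.card_filter_val_lt]
    omega
  have hA₀card : A₀.card = n / 4 := by
    have : A₀ = (Finset.Ico (⟨n / 5, by omega⟩ : Fin n) ⟨n / 5 + n / 4, by omega⟩) := by
      ext u
      simp [hA₀, Fin.le_def, Fin.lt_def]
    rw [this, Fin.card_Ico]
    simp
  -- vertices of `A₀` outside `N(x) ∪ N(y)`; at most `2 · 0.45np ≤ 0.036n` are lost
  set A₁ : Finset (Fin n) := A₀.filter (fun u => ¬ G.Adj x u ∧ ¬ G.Adj y u) with hA₁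
  have hA₁card : n / 5 + 1 ≤ A₁.card := by
    have hsub : A₀ ⊆ A₁ ∪ (A₀.filter (fun u => G.Adj x u) ∪ A₀.filter (fun u => G.Adj y u)) := by
      intro u hu
      simp only [hA₁, Finset.mem_union, Finset.mem_filter, hu, true_and]
      tauto
    have hc := (Finset.card_le_card hsub).trans ((Finset.card_union_le _ _).trans
      (Nat.add_le_add_left (Finset.card_union_le _ _) _))
    have hcx := h1 x
    have hcy := h1 y
    unfold dIn at hcx hcy
    have hc' : (A₀.card : ℝ) ≤ A₁.card + ((A₀.filter (fun u => G.Adj x u)).card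
      + (A₀.filter (fun u => G.Adj y u)).card) := by exact_mod_cast hc
    have hnp' : n * p ≤ n * (1 / 25) := by gcongr
    have h4 : (n : ℝ) < 4 * (A₀.card : ℝ) + 4 := by
      rw [hA₀card]
      have : n < 4 * (n / 4) + 4 := by omega
      exact_mod_cast this
    have h5 : 5 * ((n / 5 : ℕ) : ℝ) ≤ n := by
      have : 5 * (n / 5) ≤ n := by omega
      exact_mod_cast this
    have : ((n / 5 : ℕ) : ℝ) + 1 ≤ A₁.card := by linarith
    exact_mod_cast this
  obtain ⟨A, hAA₁, hAcard⟩ := Finset.exists_subset_card_eq hA₁card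
  have hA : ∀ u ∈ A, n / 5 ≤ u.1 ∧ u.1 < n / 5 + n / 4 ∧ ¬ G.Adj x u ∧ ¬ G.Adj y u := by
    intro u hu
    have := hAA₁ hu
    simp only [hA₁, hA₀, Finset.mem_filter, Finset.mem_univ, true_and] at this
    tauto
  have hnB : ∀ w : Fin n, w ∉ B ↔ n / 5 ≤ w.1 := by
    intro w
    simp [hB]
  set H := obstruction G A B with hH
  have hmax : ∀ u, (deg H u : ℝ) ≤ 95 / 100 * (n * p) := by
    intro u
    refine le_trans ?_ (h2 u)
    rw [Nat.cast_le]
    apply deg_le_dIn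
    rintro w ⟨hw, h | h⟩
    · exact ⟨by simpa [hBc] using (hnB w).1 h.2, hw⟩
    · exact ⟨by simpa [hBc] using (hA w h.1).1, hw⟩
  have hout : ∀ u, u ∉ A → (deg H u : ℝ) ≤ 45 / 100 * (n * p) := by
    intro u hu
    refine le_trans ?_ (h1 u)
    rw [Nat.cast_le]
    apply deg_le_dIn
    rintro w ⟨hw, h | h⟩
    · exact absurd h.1 hu
    · have := hA w h.1
      exact ⟨by simp [hA₀, this.1, this.2.1], hw⟩
  set Z : Finset (Fin n) := insert x (insert y B) with hZ
  have hxA : x ∉ A := fun h => by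
    have := (hA x h).2.1
    simp only [hx] at this
    omega
  have hyA : y ∉ A := fun h => by
    have := (hA y h).2.1
    simp only [hy] at this
    omega
  have hZcard : Z.card = n / 5 + 2 := by
    rw [hZ, Finset.card_insert_of_notMem, Finset.card_insert_of_notMem, hBcard]
    · rw [hnB, hy]
      simp only
      omega
    · rw [Finset.mem_insert, not_or]
      constructor
      · simp only [hx, hy, Fin.mk.injEq]
        omega
      · rw [hnB, hx]
        simp only
        omega
  have hzero : ∀ u, u ∉ Zᶜ → (deg H u : ℝ) ≤ 0 := by
    intro u hu
    rw [Finset.mem_compl, not_not] at hu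
    have hd : deg H u ≤ dIn G u ∅ := by
      apply deg_le_dIn
      rintro w ⟨hw, h⟩
      exfalso
      simp only [hZ, Finset.mem_insert] at hu
      rcases hu with rfl | rfl | hu
      · rcases h with h | h
        · exact hxA h.1
        · exact (hA w h.1).2.2.1 hw
      · rcases h with h | h
        · exact hyA h.1
        · exact (hA w h.1).2.2.2 hw
      · rcases h with h | h
        · exact (hnB u).2 (hA u h.1).1 hu
        · exact h.2 hu
    have : dIn G u ∅ = 0 := by simp [dIn]
    rw [this] at hd
    exact_mod_cast hd
  refine ⟨H, fun u w h => h.1, ?_, no_perfectMatching G (by omega)⟩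
  obtain ⟨v, hv, hmono⟩ := exists_sorting (deg H)
  refine ⟨v, hv, hmono, ?_⟩
  intro i hi
  have hεnp : ε * n * p ≤ 1 / 1000000 * (n * p) := by
    rw [mul_assoc]
    exact mul_le_mul_of_nonneg_right hε'.le hnp
  by_cases hi1 : (i.1 : ℝ) + 1 ≤ 4 / 100 * n
  · left
    have := hmax (v i)
    have := mul_le_mul_of_nonneg_right hi1 h0
    linarith
  · push Not at hi1
    by_cases hi2 : i.1 < n / 5 + 1
    · right
      have hz := le_of_card_le (deg H) v hv hmono 0 Zᶜ hzero
        ⟨n - (i.1 + 1) - 0 - 1, by have := i.2; omega⟩ (by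
          rw [Finset.card_compl, hZcard, Fintype.card_fin]
          simp only
          omega)
      refine hz.trans ?_
      have := mul_le_mul_of_nonneg_right hi1.le h0
      linarith
    · left
      have ho := le_of_card_le (deg H) v hv hmono _ A hout i (by omega)
      have := mul_le_mul_of_nonneg_right hi.le h0
      linarith

/-- Theorem 1.3.  For every `0 < ε < 10⁻⁶` there exists `C > 0` such
that, whenever `C log n / n ≤ p ≤ 1/25`, a.a.s. there is a subgraph
`H ∈ H^{ε,0}_{n,p}(G_{n,p})` such that `G_{n,p} ∖ H` has no perfect matching. -/
theorem not_chvatal_resilient_matching (ε : ℝ) (hε : 0 < ε) (hε' : ε < 1/1000000) :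
    ∃ C : ℝ, 0 < C ∧ ∀ η : ℝ, 0 < η → ∃ N : ℕ, ∀ n : ℕ, N ≤ n →
      ∀ p : ℝ, C * Real.log n / n ≤ p → p ≤ 1/25 →
        1 - η ≤ Pr n p (fun G =>
          ∃ H : SimpleGraph (Fin n), H ≤ G ∧ ChvatalFamily n p ε 0 H ∧
            ∀ M : (G \ H).Subgraph, ¬ M.IsPerfectMatching) := by
  -- each of the `2n` bad events has probability at most `exp (-np/200) ≤ n⁻²`
  refine ⟨400, by norm_num, fun η hη => ?_⟩
  obtain ⟨N₀, hN₀⟩ := exists_nat_gt (2 / η)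
  refine ⟨max 1000 N₀, fun n hn p hp hp' => ?_⟩
  have hn1 : 1000 ≤ n := (le_max_left _ _).trans hn
  have hnR : (1000 : ℝ) ≤ n := by exact_mod_cast hn1
  have hnpos : (0 : ℝ) < n := by linarith
  have hn2 : 2 / η < n := hN₀.trans_le (by exact_mod_cast (le_max_right _ _).trans hn)
  have hlog : 0 ≤ Real.log n := Real.log_nonneg (by linarith)
  have h0 : 0 ≤ p := le_trans (by positivity) hp
  have h1 : p ≤ 1 := by linarith
  have hnp : 400 * Real.log n ≤ n * p := by
    rw [div_le_iff₀ hnpos] at hp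
    linarith
  have hsmall : Real.exp (-(n * p) / 200) ≤ 1 / (n : ℝ) ^ 2 := by
    calc Real.exp (-(n * p) / 200) ≤ Real.exp (-(2 * Real.log n)) := by
          apply Real.exp_le_exp.2
          linarith
      _ = 1 / (n : ℝ) ^ 2 := by
          rw [Real.exp_neg, two_mul, Real.exp_add, Real.exp_log hnpos]
          field_simp
  let S₁ : Finset (Fin n) :=
    Finset.univ.filter (fun u : Fin n => n / 5 ≤ u.1 ∧ u.1 < n / 5 + n / 4)
  let S₂ : Finset (Fin n) := Finset.univ.filter (fun u : Fin n => n / 5 ≤ u.1)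
  have hS₂ : (S₂.card : ℝ) ≤ 81 / 100 * n := by
    have hc : S₂.card = n - n / 5 := by
      have : S₂ = Finset.Ici (⟨n / 5, by omega⟩ : Fin n) := by
        ext u
        simp [S₂, Fin.le_def]
      rw [this, Fin.card_Ici]
    have : 100 * S₂.card ≤ 81 * n := by omega
    have : 100 * (S₂.card : ℝ) ≤ 81 * n := by exact_mod_cast this
    linarith
  have hS₁ : (S₁.card : ℝ) ≤ 25 / 100 * n := by
    have hc : S₁.card ≤ n / 4 := by
      have : S₁ = (Finset.Ico (⟨n / 5, by omega⟩ : Fin n) ⟨n / 5 + n / 4, by omega⟩) := by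
        ext u
        simp [S₁, Fin.le_def, Fin.lt_def]
      rw [this, Fin.card_Ico]
      simp
    have : 4 * S₁.card ≤ n := by omega
    have : 4 * (S₁.card : ℝ) ≤ n := by exact_mod_cast this
    linarith
  let bad : Fin n ⊕ Fin n → SimpleGraph (Fin n) → Prop := Sum.elim
    (fun v G => 45 / 100 * (n * p) < (dIn G v S₁ : ℝ))
    (fun v G => 95 / 100 * (n * p) < (dIn G v S₂ : ℝ))
  have hbad : ∀ v, Pr n p (bad v) ≤ 1 / (n : ℝ) ^ 2 := by
    have hnp0 : 0 ≤ n * p := by positivity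
    rintro (v | v)
    · refine (Pr_dIn_tail h0 h1 v S₁ _).trans ((Real.exp_le_exp.2 ?_).trans hsmall)
      have := mul_le_mul_of_nonneg_right hS₁ h0
      linarith
    · refine (Pr_dIn_tail h0 h1 v S₂ _).trans ((Real.exp_le_exp.2 ?_).trans hsmall)
      have := mul_le_mul_of_nonneg_right hS₂ h0
      linarith
  refine le_trans ?_ (Pr_ge_of_bad h0 h1 _ bad ?_)
  · have hsum : ∑ v, Pr n p (bad v) ≤ ∑ _v : Fin n ⊕ Fin n, 1 / (n : ℝ) ^ 2 :=
      Finset.sum_le_sum fun v _ => hbad v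
    have hval : (∑ _v : Fin n ⊕ Fin n, 1 / (n : ℝ) ^ 2) = 2 / (n : ℝ) := by
      rw [Finset.sum_const, Finset.card_univ, Fintype.card_sum, Fintype.card_fin, nsmul_eq_mul]
      push_cast
      field_simp
      norm_num
    have : 2 / (n : ℝ) ≤ η := by
      rw [div_lt_iff₀ hη] at hn2
      rw [div_le_iff₀ hnpos]
      linarith
    linarith
  · intro G hG
    exact exists_H hn1 hε' h0 hp' G (fun v => not_lt.1 (hG (Sum.inl v)))
      (fun v => not_lt.1 (hG (Sum.inr v)))

end Resilience
end
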